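/- arXiv:2603.26319 — 2 statements merged into one kernel-verified Lean document; each statement's English description precedes it below -/
import Mathlib

section
/- (Non-tightness for fast-growing non-negative boundary conditions.) Let n > 2, ã > 0, β > 0, let dρ(u) = e^{−ã|u|^n} du, and let G = (V,E) be an infinite connected graph of bounded degree with a fixed origin o ∈ V, equipped with the nearest-neighbour interactions J_G. Let ξ ∈ ℝ^V satisfy ξ_x ≥ 0 for all x ∈ V, and suppose that for every A ∈ (0,∞) there exists z ∈ V with ξ_z > A^{(n−1)^{d_G(o,z)}} (i.e. ξ ∉ Ξ). Then the family of measures (ν^ξ_{Λ,β,ρ,J_G})_{Λ finite ⊂ V} is not tight: there exists a finite Λ' ⊂ V such that the family of Λ'-marginals of ν^ξ_{Λ,β,ρ,J_G}, over finite Λ ⊇ Λ', is not uniformly tight. -/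
open MeasureTheory
open scoped ENNReal Classical

/-- The Hamiltonian `-H^ξ_{Λ,J}` (already multiplied by `β`). -/
noncomputable def hamil {V : Type*} (J : V → V → ℝ) (β : ℝ) (Λ : Finset V)
    (ξ : V → ℝ) (φ : ↥Λ → ℝ) : ℝ :=
  β * ((1 / 2) * ∑ x : ↥Λ, ∑ y : ↥Λ,
      (if x.1 ≠ y.1 then J x.1 y.1 * φ x * φ y else 0)
    + ∑ x : ↥Λ, φ x * ∑' y : {y : V // y ∉ Λ}, J x.1 y.1 * ξ y.1)

/-- The finite-volume Gibbs measure `ν^ξ_{Λ,β,ρ,J}` on `ℝ^Λ`. -/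
noncomputable def gibbs {V : Type*} (J : V → V → ℝ) (β : ℝ) (ρ : Measure ℝ)
    (Λ : Finset V) (ξ : V → ℝ) : Measure (↥Λ → ℝ) :=
  (((Measure.pi fun _ : ↥Λ => ρ).withDensity
      fun φ => ENNReal.ofReal (Real.exp (hamil J β Λ ξ φ))) Set.univ)⁻¹ •
    (Measure.pi fun _ : ↥Λ => ρ).withDensity
      fun φ => ENNReal.ofReal (Real.exp (hamil J β Λ ξ φ))

/-- The `Λ'`-marginal of a measure on `ℝ^Λ`, for `Λ' ⊆ Λ`. -/
noncomputable def marg {V : Type*} {Λ' Λ : Finset V} (h : Λ' ⊆ Λ)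
    (μ : Measure (↥Λ → ℝ)) : Measure (↥Λ' → ℝ) :=
  μ.map fun φ x => φ ⟨x.1, h x.2⟩

/-! Mass escapes along a geodesic `x 0 = o, …, x k = z` to a vertex with a huge boundary value, in
`Λ = {x 0, …, x (k - 1)}`. Along the chain the partition function is an iterated one-site integral
`t ↦ ∫ exp (β (h i + t) u) f(u) dρ(u)`, and since `h i ≥ 0` each step preserves the class of `f`
with `f u ≤ f w` for `|u| ≤ w`. For such `f`, a neighbour of size `t ≥ m_{j+1}` makes `u < m_j`
exponentially unlikely as soon as `a (4 m_j)^n ≤ β m_{j+1} m_j`: translate `(-m_j, m_j)` by `3 m_j`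
and reflect `(-∞, -m_j)`. The scales `m_{j+1} = C m_j^{n-1}` grow like `A^{(n-1)^j}`, so the
hypothesis on `ξ` provides a `z` with `ξ z ≥ m_k`, and the sum of the exceptional probabilities
along the chain is at most `1/2`, however large `m_0` is. -/

section OneSite

/-- The class of functions `f` with `f u ≤ f w` whenever `|u| ≤ w`: monotone on `[0, ∞)`, and
at `-u` no larger than at `u ≥ 0`. One-site weights pushed along a chain stay in this class. -/
def AbsMonotone (f : ℝ → ℝ≥0∞) : Prop :=
  ∀ ⦃u w⦄, |u| ≤ w → f u ≤ f w

lemma absMonotone_const (c : ℝ≥0∞) : AbsMonotone fun _ => c := fun _ _ _ => le_rfl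

lemma AbsMonotone.apply_neg_le {f : ℝ → ℝ≥0∞} (hf : AbsMonotone f) {u : ℝ} (hu : 0 ≤ u) :
    f (-u) ≤ f u :=
  hf (by rw [abs_neg, abs_of_nonneg hu])

/-- The Laplace-type integral `∫ exp (s u) f(u) dρ(u)`: the weight of one site with spin law `ρ`
and further weight `f`, exposed to a field `s`. -/
noncomputable def tiltedLIntegral (ρ : Measure ℝ) (f : ℝ → ℝ≥0∞) (s : ℝ) : ℝ≥0∞ :=
  ∫⁻ u, ENNReal.ofReal (Real.exp (s * u)) * f u ∂ρ

variable {ρ : Measure ℝ} {f g : ℝ → ℝ≥0∞}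

lemma measurable_tiltedLIntegral [SFinite ρ] (hf : Measurable f) :
    Measurable (tiltedLIntegral ρ f) :=
  Measurable.lintegral_prod_right'
    (f := fun p : ℝ × ℝ => ENNReal.ofReal (Real.exp (p.1 * p.2)) * f p.2) (by fun_prop)

lemma tiltedLIntegral_mono (h : f ≤ g) (s : ℝ) :
    tiltedLIntegral ρ f s ≤ tiltedLIntegral ρ g s :=
  lintegral_mono fun u => mul_le_mul_right (h u) _

lemma tiltedLIntegral_add_const_mul (hf : Measurable f) (hg : Measurable g) (c : ℝ≥0∞) (s : ℝ) :
    tiltedLIntegral ρ (fun u => f u + c * g u) s =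
      tiltedLIntegral ρ f s + c * tiltedLIntegral ρ g s := by
  simp only [tiltedLIntegral, mul_add, mul_left_comm _ c]
  rw [lintegral_add_left (by fun_prop), lintegral_const_mul _ (by fun_prop)]

lemma ofReal_exp_mul_add_le_of_abs_le {A B : ℝ≥0∞} (hBA : B ≤ A) {x w : ℝ} (hxw : |x| ≤ w) :
    ENNReal.ofReal (Real.exp x) * A + ENNReal.ofReal (Real.exp (-x)) * B ≤
      ENNReal.ofReal (Real.exp w) * A + ENNReal.ofReal (Real.exp (-w)) * B := by
  obtain ⟨D, rfl⟩ := exists_add_of_le hBA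
  have cosh_form (y : ℝ) : ENNReal.ofReal (Real.exp y) * (B + D) +
      ENNReal.ofReal (Real.exp (-y)) * B =
        ENNReal.ofReal (2 * Real.cosh y) * B + ENNReal.ofReal (Real.exp y) * D := by
    rw [Real.cosh_eq, mul_div_cancel₀ _ two_ne_zero,
      ENNReal.ofReal_add (Real.exp_pos _).le (Real.exp_pos _).le]
    ring
  rw [cosh_form, cosh_form]
  have hcosh : Real.cosh x ≤ Real.cosh w := Real.cosh_le_cosh.2 (hxw.trans (le_abs_self w))
  have hexp : Real.exp x ≤ Real.exp w := Real.exp_le_exp.2 ((le_abs_self x).trans hxw)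
  gcongr

lemma two_mul_tiltedLIntegral [ρ.IsNegInvariant] (hf : Measurable f) (s : ℝ) :
    2 * tiltedLIntegral ρ f s =
      ∫⁻ u, (ENNReal.ofReal (Real.exp (s * u)) * f u +
        ENNReal.ofReal (Real.exp (-(s * u))) * f (-u)) ∂ρ := by
  rw [lintegral_add_left (by fun_prop), two_mul]
  congr 1
  simpa only [tiltedLIntegral, mul_neg] using
    (lintegral_neg_eq_self (μ := ρ) fun u => ENNReal.ofReal (Real.exp (s * u)) * f u).symm

lemma AbsMonotone.tiltedLIntegral [ρ.IsNegInvariant] (hf : Measurable f) (hmono : AbsMonotone f) :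
    AbsMonotone (tiltedLIntegral ρ f) := by
  intro s t hst
  have pair_le_of_nonneg {u : ℝ} (hu : 0 ≤ u) :
      ENNReal.ofReal (Real.exp (s * u)) * f u + ENNReal.ofReal (Real.exp (-(s * u))) * f (-u) ≤
        ENNReal.ofReal (Real.exp (t * u)) * f u +
          ENNReal.ofReal (Real.exp (-(t * u))) * f (-u) := by
    apply ofReal_exp_mul_add_le_of_abs_le (hmono.apply_neg_le hu)
    rw [abs_mul, abs_of_nonneg hu]
    exact mul_le_mul_of_nonneg_right hst hu
  refine (ENNReal.mul_le_mul_iff_right two_ne_zero ENNReal.ofNat_ne_top).1 ?_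
  rw [two_mul_tiltedLIntegral hf, two_mul_tiltedLIntegral hf]
  refine lintegral_mono fun u => ?_
  rcases le_total 0 u with hu | hu
  · exact pair_le_of_nonneg hu
  · simpa only [mul_neg, neg_neg, add_comm] using pair_le_of_nonneg (neg_nonneg.2 hu)

end OneSite

section Potential

/-- The single-spin measure `exp (-U u) du` with potential `U`. -/
noncomputable def potentialMeasure (U : ℝ → ℝ) : Measure ℝ :=
  volume.withDensity fun u => ENNReal.ofReal (Real.exp (-(U u)))

/-- Even, non-negative, measurable potentials. -/
structure IsEvenPotential (U : ℝ → ℝ) : Prop where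
  measurable : Measurable U
  nonneg : ∀ u, 0 ≤ U u
  even : ∀ u, U (-u) = U u

lemma isEvenPotential_abs_rpow {a : ℝ} (ha : 0 ≤ a) (n : ℝ) :
    IsEvenPotential fun u => a * |u| ^ n where
  measurable := by fun_prop
  nonneg u := by positivity
  even u := by rw [abs_neg]

variable {U : ℝ → ℝ} {f : ℝ → ℝ≥0∞}

instance : SigmaFinite (potentialMeasure U) :=
  SigmaFinite.withDensity_ofReal _

lemma IsEvenPotential.isNegInvariant (hU : IsEvenPotential U) :
    (potentialMeasure U).IsNegInvariant where
  neg_eq_self := by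
    ext S hS
    rw [Measure.neg_apply, potentialMeasure, withDensity_apply _ hS.neg, withDensity_apply _ hS,
      ← lintegral_indicator hS.neg, ← lintegral_indicator hS, ← lintegral_neg_eq_self]
    congr with u
    simp only [Set.indicator_apply, Set.mem_neg, neg_neg, hU.even]

lemma tiltedLIntegral_potentialMeasure (hU : Measurable U) (hf : Measurable f) (s : ℝ) :
    tiltedLIntegral (potentialMeasure U) f s =
      ∫⁻ u, ENNReal.ofReal (Real.exp (s * u - U u)) * f u := by
  rw [tiltedLIntegral, potentialMeasure,
    lintegral_withDensity_eq_lintegral_mul _ (by fun_prop) (by fun_prop)]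
  refine lintegral_congr fun u => ?_
  rw [Pi.mul_apply, ← mul_assoc, ← ENNReal.ofReal_mul (Real.exp_pos _).le, ← Real.exp_add,
    neg_add_eq_sub]

lemma ofReal_exp_mul_le {c p q : ℝ} (hpq : p ≤ -c + q) {A B : ℝ≥0∞} (hAB : A ≤ B) :
    ENNReal.ofReal (Real.exp p) * A ≤
      ENNReal.ofReal (Real.exp (-c)) * (ENNReal.ofReal (Real.exp q) * B) := by
  rw [← mul_assoc, ← ENNReal.ofReal_mul (Real.exp_pos _).le, ← Real.exp_add]
  gcongr

/-- For `u < m`, either the reflection `-u` or the translate `u + 3 m` carries a much larger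
weight than `u`. -/
lemma IsEvenPotential.ofReal_exp_mul_le_of_lt (hU : IsEvenPotential U) (hmono : AbsMonotone f)
    {s m : ℝ} (hs : 0 ≤ s) (hUm : ∀ v, |v| ≤ 4 * m → U v ≤ s * m)
    {u : ℝ} (hum : u < m) :
    ENNReal.ofReal (Real.exp (s * u - U u)) * f u ≤
      ENNReal.ofReal (Real.exp (-(2 * (s * m)))) *
        (ENNReal.ofReal (Real.exp (s * -u - U (-u))) * f (-u) +
          ENNReal.ofReal (Real.exp (s * (u + 3 * m) - U (u + 3 * m))) * f (u + 3 * m)) := by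
  rcases le_total (-m) u with hmu | hum'
  · refine (ofReal_exp_mul_le ?_ (hmono ?_)).trans (mul_le_mul_right le_add_self _)
    · have hU_le : U (u + 3 * m) ≤ s * m := hUm _ (abs_le.2 ⟨by linarith, by linarith⟩)
      linarith [hU.nonneg u]
    · exact abs_le.2 ⟨by linarith, by linarith⟩
  · refine (ofReal_exp_mul_le ?_ (hmono ?_)).trans (mul_le_mul_right le_self_add _)
    · rw [hU.even]
      nlinarith
    · rw [abs_of_nonpos (by linarith)]

lemma IsEvenPotential.tiltedLIntegral_indicator_Iio_le (hU : IsEvenPotential U)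
    (hf : Measurable f) (hmono : AbsMonotone f) {s m : ℝ} (hs : 0 ≤ s)
    (hUm : ∀ v, |v| ≤ 4 * m → U v ≤ s * m) :
    tiltedLIntegral (potentialMeasure U) ((Set.Iio m).indicator f) s ≤
      ENNReal.ofReal (2 * Real.exp (-(2 * (s * m)))) *
        tiltedLIntegral (potentialMeasure U) f s := by
  have hU_meas := hU.measurable
  rw [tiltedLIntegral_potentialMeasure hU_meas (hf.indicator measurableSet_Iio),
    tiltedLIntegral_potentialMeasure hU_meas hf]
  set Y : ℝ → ℝ≥0∞ := fun u => ENNReal.ofReal (Real.exp (s * u - U u)) * f u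
  set D := ENNReal.ofReal (Real.exp (-(2 * (s * m)))) with hD
  calc ∫⁻ u, ENNReal.ofReal (Real.exp (s * u - U u)) * (Set.Iio m).indicator f u
      ≤ ∫⁻ u, D * (Y (-u) + Y (u + 3 * m)) := by
        refine lintegral_mono fun u => ?_
        by_cases hum : u < m
        · rw [Set.indicator_of_mem (Set.mem_Iio.2 hum)]
          exact hU.ofReal_exp_mul_le_of_lt hmono hs hUm hum
        · rw [Set.indicator_of_notMem (by exact hum), mul_zero]
          exact zero_le
    _ = D * (2 * ∫⁻ u, Y u) := by
        rw [lintegral_const_mul _ (by fun_prop), lintegral_add_left (by fun_prop),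
          lintegral_neg_eq_self, lintegral_add_right_eq_self, two_mul]
    _ = ENNReal.ofReal (2 * Real.exp (-(2 * (s * m)))) * ∫⁻ u, Y u := by
        rw [hD, ENNReal.ofReal_mul zero_le_two, ENNReal.ofReal_ofNat]
        ring

end Potential

section Chain

/-- The partition function of a chain of `k` sites with spin law `ρ`, external fields
`h 0, …, h (k - 1)`, nearest-neighbour coupling `β`, an extra weight `g` on the spin at site `0`,
and the spin at site `k` frozen to the argument. -/
noncomputable def chainWeight (ρ : Measure ℝ) (β : ℝ) (h : ℕ → ℝ) (g : ℝ → ℝ≥0∞) :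
    ℕ → ℝ → ℝ≥0∞
  | 0 => g
  | k + 1 => fun t => tiltedLIntegral ρ (chainWeight ρ β h g k) (β * (h k + t))

variable {ρ : Measure ℝ} {β : ℝ} {h : ℕ → ℝ} {g g' : ℝ → ℝ≥0∞}

lemma measurable_chainWeight [SFinite ρ] (hg : Measurable g) (k : ℕ) :
    Measurable (chainWeight ρ β h g k) := by
  induction k with
  | zero => exact hg
  | succ k ih => exact (measurable_tiltedLIntegral ih).comp (by fun_prop)

lemma chainWeight_mono (hg : g ≤ g') (k : ℕ) :
    chainWeight ρ β h g k ≤ chainWeight ρ β h g' k := by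
  induction k with
  | zero => exact hg
  | succ k ih => exact fun t => tiltedLIntegral_mono ih _

lemma AbsMonotone.chainWeight [SFinite ρ] [ρ.IsNegInvariant] (hβ : 0 ≤ β) (hh : ∀ i, 0 ≤ h i)
    (hg : Measurable g) (hmono : AbsMonotone g) (k : ℕ) :
    AbsMonotone (chainWeight ρ β h g k) := by
  induction k with
  | zero => exact hmono
  | succ k ih =>
    intro s t hst
    refine ih.tiltedLIntegral (measurable_chainWeight hg k) ?_
    rw [abs_mul, abs_of_nonneg hβ]
    gcongr
    exact (abs_add_le _ _).trans (add_le_add (abs_of_nonneg (hh k)).le hst)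

/-- If the spin at site `k` is frozen above the scale `m k`, the spin at site `0` can only drop
below `m 0` if some spin `j < k` drops below `m j` while its successor exceeds `m (j + 1)`. -/
lemma IsEvenPotential.chainWeight_indicator_Iio_le {U : ℝ → ℝ} (hU : IsEvenPotential U)
    (hβ : 0 ≤ β) (hh : ∀ i, 0 ≤ h i) {m : ℕ → ℝ} (hm : ∀ j, 0 ≤ m j)
    (hUm : ∀ j v, |v| ≤ 4 * m j → U v ≤ β * m (j + 1) * m j) (k : ℕ) {t : ℝ} (ht : m k ≤ t) :
    chainWeight (potentialMeasure U) β h ((Set.Iio (m 0)).indicator 1) k t ≤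
      (∑ j ∈ Finset.range k, ENNReal.ofReal (2 * Real.exp (-(2 * (β * m (j + 1) * m j))))) *
        chainWeight (potentialMeasure U) β h 1 k t := by
  have := hU.isNegInvariant
  induction k generalizing t with
  | zero => simp [chainWeight, ht]
  | succ k ih =>
    set F := chainWeight (potentialMeasure U) β h 1 k
    set N := chainWeight (potentialMeasure U) β h ((Set.Iio (m 0)).indicator 1) k
    set e := ∑ j ∈ Finset.range k, ENNReal.ofReal (2 * Real.exp (-(2 * (β * m (j + 1) * m j))))
    have hF : Measurable F := measurable_chainWeight measurable_one k
    have hF_mono : AbsMonotone F :=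
      (absMonotone_const 1).chainWeight hβ hh measurable_const k
    have hNF : N ≤ F := chainWeight_mono (Set.indicator_le_self' fun _ _ => zero_le) k
    have hN (u : ℝ) : N u ≤ (Set.Iio (m k)).indicator F u + e * F u := by
      by_cases hu : u < m k
      · rw [Set.indicator_of_mem (Set.mem_Iio.2 hu)]
        exact (hNF u).trans le_self_add
      · exact (ih (not_lt.1 hu)).trans le_add_self
    set s := β * (h k + t)
    have hs : β * m (k + 1) ≤ s := mul_le_mul_of_nonneg_left (by linarith [hh k]) hβ
    have hscale : β * m (k + 1) * m k ≤ s * m k := mul_le_mul_of_nonneg_right hs (hm k)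
    calc tiltedLIntegral (potentialMeasure U) N s
        ≤ tiltedLIntegral (potentialMeasure U)
            (fun u => (Set.Iio (m k)).indicator F u + e * F u) s := tiltedLIntegral_mono hN s
      _ = tiltedLIntegral (potentialMeasure U) ((Set.Iio (m k)).indicator F) s +
            e * tiltedLIntegral (potentialMeasure U) F s :=
          tiltedLIntegral_add_const_mul (hF.indicator measurableSet_Iio) hF e s
      _ ≤ ENNReal.ofReal (2 * Real.exp (-(2 * (s * m k)))) *
            tiltedLIntegral (potentialMeasure U) F s +
              e * tiltedLIntegral (potentialMeasure U) F s := by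
          gcongr
          exact hU.tiltedLIntegral_indicator_Iio_le hF hF_mono
            ((mul_nonneg hβ (hm (k + 1))).trans hs) fun v hv => (hUm k v hv).trans hscale
      _ ≤ (∑ j ∈ Finset.range (k + 1),
            ENNReal.ofReal (2 * Real.exp (-(2 * (β * m (j + 1) * m j))))) *
              tiltedLIntegral (potentialMeasure U) F s := by
          rw [Finset.sum_range_succ, add_mul, add_comm]
          gcongr

end Chain

section Marginal

lemma mem_image_range_iff_of_injOn {V : Type*} {x : ℕ → V} {k : ℕ}
    (hx : Set.InjOn x (Set.Iic k)) {i j : ℕ} (hi : i ≤ k) (hj : j ≤ k) :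
    x j ∈ (Finset.range i).image x ↔ j < i := by
  refine ⟨fun hmem => ?_, fun hji => Finset.mem_image_of_mem x (Finset.mem_range.2 hji)⟩
  obtain ⟨l, hl, hlj⟩ := Finset.mem_image.1 hmem
  have hli := Finset.mem_range.1 hl
  exact hx (hli.le.trans hi) hj hlj ▸ hli

lemma lmarginal_mul_of_dependsOn {δ : Type*} {X : δ → Type*} [∀ i, MeasurableSpace (X i)]
    {μ : ∀ i, Measure (X i)} {s : Finset δ} {c f : (∀ i, X i) → ℝ≥0∞}
    (hc : DependsOn c (s : Set δ)ᶜ) (hf : Measurable f) (ψ : ∀ i, X i) :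
    lmarginal μ s (fun ψ => c ψ * f ψ) ψ = c ψ * lmarginal μ s f ψ := by
  have hc_update (φ) : c (Function.updateFinset ψ s φ) = c ψ :=
    hc fun _ hi => dif_neg hi
  simp only [lmarginal, hc_update]
  exact lintegral_const_mul _ (hf.comp measurable_updateFinset)

lemma lmarginal_chain {V : Type*} {ρ : Measure ℝ} [SigmaFinite ρ] {β : ℝ} {h : ℕ → ℝ}
    {g : ℝ → ℝ≥0∞} (hg : Measurable g) {x : ℕ → V} {k : ℕ} (hx : Set.InjOn x (Set.Iic k))
    (ψ : V → ℝ) :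
    lmarginal (fun _ : V => ρ) ((Finset.range k).image x)
      (fun ψ => g (ψ (x 0)) * ENNReal.ofReal (Real.exp
        (∑ i ∈ Finset.range k, β * (h i + ψ (x (i + 1))) * ψ (x i)))) ψ =
      chainWeight ρ β h g k (ψ (x k)) := by
  induction k generalizing ψ with
  | zero => simp [chainWeight]
  | succ k ih =>
    have notMem {j : ℕ} (hkj : k ≤ j) (hj : j ≤ k + 1) : x j ∉ (Finset.range k).image x :=
      fun hmem => hkj.not_gt ((mem_image_range_iff_of_injOn hx k.le_succ hj).1 hmem)
    have hne : x (k + 1) ≠ x k := fun heq =>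
      k.succ_ne_self (hx (Set.mem_Iic.2 le_rfl) (Set.mem_Iic.2 k.le_succ) heq)
    rw [Finset.range_add_one, Finset.image_insert,
      lmarginal_insert _ (by fun_prop) (notMem le_rfl k.le_succ)]
    refine lintegral_congr fun u => ?_
    have last_factor (ψ : V → ℝ) : g (ψ (x 0)) * ENNReal.ofReal (Real.exp
          (∑ i ∈ insert k (Finset.range k), β * (h i + ψ (x (i + 1))) * ψ (x i))) =
        ENNReal.ofReal (Real.exp (β * (h k + ψ (x (k + 1))) * ψ (x k))) *
          (g (ψ (x 0)) * ENNReal.ofReal (Real.exp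
            (∑ i ∈ Finset.range k, β * (h i + ψ (x (i + 1))) * ψ (x i)))) := by
      rw [Finset.sum_insert Finset.notMem_range_self, Real.exp_add,
        ENNReal.ofReal_mul (Real.exp_pos _).le, mul_left_comm]
    simp only [last_factor]
    rw [lmarginal_mul_of_dependsOn _ (by fun_prop), ih (hx.mono (Set.Iic_subset_Iic.2 k.le_succ)),
      Function.update_self, Function.update_of_ne hne]
    intro ψ₁ ψ₂ hψ
    simp only [hψ (x k) (notMem le_rfl k.le_succ), hψ (x (k + 1)) (notMem k.le_succ le_rfl)]

end Marginal

section InducedPath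

variable {V : Type*} {G : SimpleGraph V} {x : ℕ → V} {k : ℕ}

/-- The vertices `x 0, …, x k` form an induced path of `G`: they are distinct, and adjacent
exactly when their indices are consecutive. The values `x i` with `i > k` are irrelevant. -/
structure IsInducedPath (G : SimpleGraph V) (x : ℕ → V) (k : ℕ) : Prop where
  injOn : Set.InjOn x (Set.Iic k)
  adj_iff : ∀ ⦃i j⦄, i ≤ k → j ≤ k → (G.Adj (x i) (x j) ↔ i + 1 = j ∨ j + 1 = i)

lemma dist_getVert_of_length_eq_dist {o z : V} {p : G.Walk o z} (hp : p.length = G.dist o z)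
    {i : ℕ} (hi : i ≤ p.length) : G.dist o (p.getVert i) = i := by
  rw [← SimpleGraph.length_eq_dist_of_subwalk hp (p.isSubwalk_take i),
    SimpleGraph.Walk.take_length, min_eq_left hi]

lemma exists_isInducedPath_of_reachable {o z : V} (hoz : G.Reachable o z) :
    ∃ x : ℕ → V, x 0 = o ∧ x (G.dist o z) = z ∧ IsInducedPath G x (G.dist o z) := by
  obtain ⟨p, hp⟩ := hoz.exists_walk_length_eq_dist
  rw [← hp]
  have hdist {i : ℕ} (hi : i ≤ p.length) : G.dist o (p.getVert i) = i :=
    dist_getVert_of_length_eq_dist hp hi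
  refine ⟨p.getVert, p.getVert_zero, p.getVert_length,
    (p.isPath_of_length_eq_dist hp).getVert_injOn, fun i j hi hj => ⟨fun hadj => ?_, ?_⟩⟩
  · have hne : i ≠ j := by
      rintro rfl
      exact G.irrefl hadj
    have := hadj.diff_dist_adj (u := o)
    rw [hdist hi, hdist hj] at this
    omega
  · rintro (rfl | rfl)
    · exact p.adj_getVert_succ hj
    · exact (p.adj_getVert_succ hi).symm

lemma half_sum_consecutive_add (b : ℕ → ℝ) (k : ℕ) :
    1 / 2 * (∑ i ∈ Finset.range k, ∑ j ∈ Finset.range k,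
        if i + 1 = j ∨ j + 1 = i then b i * b j else 0) +
      (∑ i ∈ Finset.range k, if i + 1 = k then b i * b k else 0) =
      ∑ i ∈ Finset.range k, b i * b (i + 1) := by
  have split_orientation (i j : ℕ) : (if i + 1 = j ∨ j + 1 = i then b i * b j else 0) =
      (if i + 1 = j then b i * b j else 0) + if j + 1 = i then b j * b i else 0 := by
    split_ifs <;> first | omega | ring
  have append_last (i : ℕ) (hi : i ∈ Finset.range k) :
      (∑ j ∈ Finset.range k, if i + 1 = j then b i * b j else 0) +
        (if i + 1 = k then b i * b k else 0) = b i * b (i + 1) := by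
    rw [← Finset.sum_range_succ fun j => if i + 1 = j then b i * b j else 0, Finset.sum_ite_eq,
      if_pos (by simpa using hi)]
  rw [← Finset.sum_congr rfl append_last, Finset.sum_add_distrib]
  simp only [split_orientation, Finset.sum_add_distrib]
  rw [Finset.sum_comm (f := fun i j => if j + 1 = i then b j * b i else 0)]
  ring

variable [DecidableRel G.Adj] {ξ : V → ℝ}

/-- The nearest-neighbour interactions `J_G`. -/
def nearestNeighbour (G : SimpleGraph V) [DecidableRel G.Adj] (x y : V) : ℝ :=
  if G.Adj x y then 1 else 0

lemma nearestNeighbour_nonneg (v y : V) : 0 ≤ nearestNeighbour G v y :=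
  ite_nonneg zero_le_one le_rfl

lemma summable_nearestNeighbour_mul {v : V} (hv : (G.neighborSet v).Finite) (Λ : Finset V)
    (ξ : V → ℝ) : Summable fun y : {y : V // y ∉ Λ} => nearestNeighbour G v y.1 * ξ y.1 := by
  refine summable_of_hasFiniteSupport
    ((hv.preimage Subtype.val_injective.injOn).subset fun y hy => ?_)
  by_contra hadj
  exact hy (mul_eq_zero_of_left (if_neg hadj) _)

/-- The field exerted on `x i` by the boundary condition `ξ` outside `{x 0, …, x (k - 1)}`, apart
from the contribution of `x k`, which is kept as the end of the chain. -/
noncomputable def residualField (G : SimpleGraph V) [DecidableRel G.Adj] (ξ : V → ℝ)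
    (x : ℕ → V) (k i : ℕ) : ℝ :=
  (∑' y : {y : V // y ∉ (Finset.range k).image x}, nearestNeighbour G (x i) y.1 * ξ y.1) -
    if i + 1 = k then ξ (x k) else 0

lemma IsInducedPath.residualField_nonneg (hx : IsInducedPath G x k)
    (hfin : ∀ v, (G.neighborSet v).Finite) (hξ : ∀ v, 0 ≤ ξ v) (i : ℕ) :
    0 ≤ residualField G ξ x k i := by
  have term_nonneg (y : {y : V // y ∉ (Finset.range k).image x}) :
      0 ≤ nearestNeighbour G (x i) y.1 * ξ y.1 :=
    mul_nonneg (nearestNeighbour_nonneg _ _) (hξ _)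
  rw [residualField]
  split_ifs with hik
  · have hxk : x k ∉ (Finset.range k).image x := fun hmem =>
      lt_irrefl k ((mem_image_range_iff_of_injOn hx.injOn le_rfl le_rfl).1 hmem)
    have hle := (summable_nearestNeighbour_mul (hfin (x i)) _ ξ).le_tsum ⟨x k, hxk⟩
      fun y _ => term_nonneg y
    have hadj : G.Adj (x i) (x k) := (hx.adj_iff (by omega) le_rfl).2 (Or.inl hik)
    rw [nearestNeighbour, if_pos hadj, one_mul] at hle
    exact sub_nonneg.2 hle
  · exact sub_nonneg.2 (tsum_nonneg term_nonneg)

lemma IsInducedPath.hamil_eq_sum (hx : IsInducedPath G x k) (β : ℝ) {ψ : V → ℝ}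
    (hψ : ψ (x k) = ξ (x k)) :
    hamil (nearestNeighbour G) β ((Finset.range k).image x) ξ (fun y => ψ y.1) =
      ∑ i ∈ Finset.range k, β * (residualField G ξ x k i + ψ (x (i + 1))) * ψ (x i) := by
  have sum_path (f : V → ℝ) :
      ∑ y : ↥((Finset.range k).image x), f y.1 = ∑ i ∈ Finset.range k, f (x i) := by
    rw [Finset.sum_coe_sort _ f, Finset.sum_image]
    exact hx.injOn.mono fun i hi => (Finset.mem_range.1 hi).le
  have coupling {i j : ℕ} (hi : i ∈ Finset.range k) (hj : j ∈ Finset.range k) :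
      (if x i ≠ x j then nearestNeighbour G (x i) (x j) * ψ (x i) * ψ (x j) else 0) =
        if i + 1 = j ∨ j + 1 = i then ψ (x i) * ψ (x j) else 0 := by
    simp only [← hx.adj_iff (Finset.mem_range.1 hi).le (Finset.mem_range.1 hj).le,
      nearestNeighbour]
    split_ifs with hne hadj hadj
    · rw [one_mul]
    · rw [zero_mul, zero_mul]
    · exact absurd hadj.ne hne
    · rfl
  have interior : ∑ v : ↥((Finset.range k).image x), ∑ y : ↥((Finset.range k).image x),
        (if v.1 ≠ y.1 then nearestNeighbour G v.1 y.1 * ψ v.1 * ψ y.1 else 0) =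
      ∑ i ∈ Finset.range k, ∑ j ∈ Finset.range k,
        if i + 1 = j ∨ j + 1 = i then ψ (x i) * ψ (x j) else 0 := by
    rw [sum_path fun v => ∑ y : ↥((Finset.range k).image x),
      if v ≠ y.1 then nearestNeighbour G v y.1 * ψ v * ψ y.1 else 0]
    refine Finset.sum_congr rfl fun i hi => ?_
    rw [sum_path fun y => if x i ≠ y then nearestNeighbour G (x i) y * ψ (x i) * ψ y else 0]
    exact Finset.sum_congr rfl fun j hj => coupling hi hj
  have boundary := sum_path fun v => ψ v *
    ∑' y : {y : V // y ∉ (Finset.range k).image x}, nearestNeighbour G v y.1 * ξ y.1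
  have chain := half_sum_consecutive_add (fun i => ψ (x i)) k
  rw [hamil, interior, boundary, eq_sub_of_add_eq chain, ← Finset.sum_sub_distrib,
    ← Finset.sum_add_distrib, Finset.mul_sum]
  refine Finset.sum_congr rfl fun i _ => ?_
  rw [residualField, ← hψ]
  split_ifs <;> ring

lemma IsInducedPath.lintegral_exp_hamil (hx : IsInducedPath G x k) {ρ : Measure ℝ}
    [SigmaFinite ρ] (β : ℝ) {g : ℝ → ℝ≥0∞} (hg : Measurable g)
    (h0 : x 0 ∈ (Finset.range k).image x) :
    ∫⁻ φ, g (φ ⟨x 0, h0⟩) * ENNReal.ofReal (Real.exp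
        (hamil (nearestNeighbour G) β ((Finset.range k).image x) ξ φ))
      ∂(Measure.pi fun _ => ρ) =
      chainWeight ρ β (residualField G ξ x k) g k (ξ (x k)) := by
  rw [← lmarginal_chain hg hx.injOn ξ, lmarginal]
  refine lintegral_congr fun φ => ?_
  set ψ := Function.updateFinset ξ ((Finset.range k).image x) φ
  have hψφ : (fun y : ↥((Finset.range k).image x) => ψ y.1) = φ :=
    funext fun y => dif_pos y.2
  have hψξ : ψ (x k) = ξ (x k) := dif_neg fun hmem =>
    lt_irrefl k ((mem_image_range_iff_of_injOn hx.injOn le_rfl le_rfl).1 hmem)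
  rw [← hx.hamil_eq_sum β hψξ, hψφ, ← congrFun hψφ ⟨x 0, h0⟩]

end InducedPath

section Gibbs

lemma gibbs_apply_le {V : Type*} {J : V → V → ℝ} {β : ℝ} {ρ : Measure ℝ} {Λ : Finset V}
    {ξ : V → ℝ} {S : Set (↥Λ → ℝ)} (hS : MeasurableSet S) {c : ℝ≥0∞}
    (h : ∫⁻ φ, S.indicator 1 φ * ENNReal.ofReal (Real.exp (hamil J β Λ ξ φ))
        ∂(Measure.pi fun _ => ρ) ≤
      c * ∫⁻ φ, ENNReal.ofReal (Real.exp (hamil J β Λ ξ φ)) ∂(Measure.pi fun _ => ρ)) :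
    gibbs J β ρ Λ ξ S ≤ c := by
  set μ := (Measure.pi fun _ : ↥Λ => ρ).withDensity
    fun φ => ENNReal.ofReal (Real.exp (hamil J β Λ ξ φ)) with hμ
  have hμS : μ S ≤ c * μ Set.univ := by
    rw [hμ, withDensity_apply _ hS, withDensity_apply _ MeasurableSet.univ,
      Measure.restrict_univ, ← lintegral_indicator hS]
    convert h using 3 with φ
    by_cases hφ : φ ∈ S <;> simp [hφ]
  calc (μ Set.univ)⁻¹ * μ S ≤ (μ Set.univ)⁻¹ * (c * μ Set.univ) := by gcongr
    _ = c * ((μ Set.univ)⁻¹ * μ Set.univ) := mul_left_comm _ _ _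
    _ ≤ c * 1 := by gcongr; exact ENNReal.inv_mul_le_one _
    _ = c := mul_one c

variable {V : Type*} {G : SimpleGraph V} [DecidableRel G.Adj] {ξ : V → ℝ} {β : ℝ}

lemma IsInducedPath.gibbs_lt_le_sum {x : ℕ → V} {k : ℕ} (hx : IsInducedPath G x k)
    (hfin : ∀ v, (G.neighborSet v).Finite) (hξ : ∀ v, 0 ≤ ξ v) (hβ : 0 ≤ β)
    {U : ℝ → ℝ} (hU : IsEvenPotential U) {m : ℕ → ℝ} (hm : ∀ j, 0 ≤ m j)
    (hUm : ∀ j v, |v| ≤ 4 * m j → U v ≤ β * m (j + 1) * m j) (hmk : m k ≤ ξ (x k))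
    (h0 : x 0 ∈ (Finset.range k).image x) :
    gibbs (nearestNeighbour G) β (potentialMeasure U) ((Finset.range k).image x) ξ
        {φ | φ ⟨x 0, h0⟩ < m 0} ≤
      ∑ j ∈ Finset.range k, ENNReal.ofReal (2 * Real.exp (-(2 * (β * m (j + 1) * m j)))) := by
  refine gibbs_apply_le (measurableSet_lt (measurable_pi_apply _) measurable_const) ?_
  have hchain := hU.chainWeight_indicator_Iio_le hβ (hx.residualField_nonneg hfin hξ) hm hUm k hmk
  rw [← hx.lintegral_exp_hamil β (measurable_one.indicator measurableSet_Iio) h0,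
    ← hx.lintegral_exp_hamil β measurable_one h0] at hchain
  simpa only [Pi.one_apply, one_mul, Set.indicator_apply, Set.mem_Iio, Set.mem_ofPred_eq]
    using hchain

end Gibbs

section Scales

lemma sum_ofReal_two_mul_exp_le {c : ℕ → ℝ} (hc : ∀ j : ℕ, (j : ℝ) + 2 ≤ c j) (k : ℕ) :
    ∑ j ∈ Finset.range k, ENNReal.ofReal (2 * Real.exp (-(2 * c j))) ≤
      ENNReal.ofReal (1 / 2) := by
  have exp_neg_one_le : Real.exp (-1) ≤ 1 / 2 := by
    rw [Real.exp_neg, one_div]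
    exact inv_anti₀ two_pos (by linarith [Real.add_one_le_exp (1 : ℝ)])
  have term_le (j : ℕ) : 2 * Real.exp (-(2 * c j)) ≤ 1 / 4 * (1 / 2) ^ j := by
    calc 2 * Real.exp (-(2 * c j)) ≤ 2 * Real.exp ((j + 3 : ℕ) * (-1)) := by
          gcongr
          push_cast
          linarith [hc j, j.cast_nonneg (α := ℝ)]
      _ = 2 * Real.exp (-1) ^ (j + 3) := by rw [Real.exp_nat_mul]
      _ ≤ 2 * (1 / 2) ^ (j + 3) := by gcongr
      _ = 1 / 4 * (1 / 2) ^ j := by ring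
  rw [← ENNReal.ofReal_sum_of_nonneg fun _ _ => by positivity]
  refine ENNReal.ofReal_le_ofReal ?_
  calc ∑ j ∈ Finset.range k, 2 * Real.exp (-(2 * c j))
      ≤ 1 / 4 * ∑ j ∈ Finset.range k, (1 / 2) ^ j := by
        rw [Finset.mul_sum]
        exact Finset.sum_le_sum fun j _ => term_le j
    _ ≤ 1 / 2 := by linarith [sum_geometric_two_le k]

/-- The recursion `m (j + 1) = b ^ (n - 2) * m j ^ (n - 1)` is solved by
`m j = A ^ ((n - 1) ^ j) / b`. -/
lemma exists_rapidly_growing_scales {n : ℝ} (hn : 2 < n) (C M : ℝ) :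
    ∃ m : ℕ → ℝ, ∃ A : ℝ, 0 < A ∧ M ≤ m 0 ∧ (∀ j : ℕ, (j : ℝ) + 2 ≤ m j) ∧
      (∀ j, C * m j ^ (n - 1) ≤ m (j + 1)) ∧ ∀ j, m j ≤ A ^ ((n - 1) ^ j) := by
  obtain ⟨b, hbC, hb⟩ := (((tendsto_rpow_atTop (sub_pos.2 hn)).eventually_ge_atTop (max 2 C)).and
    (Filter.eventually_ge_atTop 1)).exists
  obtain ⟨hb2, hbC⟩ := max_le_iff.1 hbC
  have hb0 : 0 < b := by linarith
  set A := b * max 2 M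
  have hA : 0 < A := by positivity
  set m : ℕ → ℝ := fun j => A ^ ((n - 1) ^ j) / b
  have hm0 : m 0 = max 2 M := by
    simp only [m, pow_zero, Real.rpow_one, A, mul_div_cancel_left₀ _ hb0.ne']
  have hm_pos (j : ℕ) : 0 < m j := by positivity
  have hm_succ (j : ℕ) : m (j + 1) = b ^ (n - 2) * m j ^ (n - 1) := by
    have hb_pow : b ^ (n - 1) = b ^ (n - 2) * b := by
      rw [← Real.rpow_add_one hb0.ne']
      ring_nf
    simp only [m]
    rw [Real.div_rpow (by positivity) hb0.le, ← Real.rpow_mul hA.le, ← pow_succ, hb_pow]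
    field_simp
  have hm_ge (j : ℕ) : (j : ℝ) + 2 ≤ m j := by
    induction j with
    | zero => simp [hm0]
    | succ j ih =>
      have hm_one : 1 ≤ m j := by linarith [j.cast_nonneg (α := ℝ)]
      have hle : m j ≤ m j ^ (n - 1) := Real.self_le_rpow_of_one_le hm_one (by linarith)
      calc ((j + 1 : ℕ) : ℝ) + 2 ≤ 2 * m j := by push_cast; linarith
        _ ≤ b ^ (n - 2) * m j ^ (n - 1) := mul_le_mul hb2 hle (hm_pos j).le (by linarith)
        _ = m (j + 1) := (hm_succ j).symm
  refine ⟨m, A, hA, hm0 ▸ le_max_right 2 M, hm_ge, fun j => ?_, fun j => ?_⟩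
  · rw [hm_succ]
    exact mul_le_mul_of_nonneg_right hbC (Real.rpow_nonneg (hm_pos j).le _)
  · exact div_le_self (by positivity) hb

lemma mul_abs_rpow_le_of_abs_le {a n C β m m' v : ℝ} (ha : 0 ≤ a) (hn : 0 ≤ n) (hβ : 0 ≤ β)
    (hm : 0 < m) (haC : a * 4 ^ n ≤ β * C) (hm' : C * m ^ (n - 1) ≤ m') (hv : |v| ≤ 4 * m) :
    a * |v| ^ n ≤ β * m' * m := by
  have hpow : m ^ n = m ^ (n - 1) * m := by
    rw [← Real.rpow_add_one hm.ne', sub_add_cancel]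
  calc a * |v| ^ n ≤ a * (4 * m) ^ n := by gcongr
    _ = a * 4 ^ n * m ^ (n - 1) * m := by
      rw [Real.mul_rpow (by norm_num) hm.le, hpow]
      ring
    _ ≤ β * C * m ^ (n - 1) * m := by gcongr
    _ = β * (C * m ^ (n - 1)) * m := by ring
    _ ≤ β * m' * m := by gcongr

lemma le_mul_mul_of_one_le {n C β m m' : ℝ} (hn : 1 ≤ n) (hβ : 0 ≤ β) (hm : 1 ≤ m)
    (hC : 1 ≤ β * C) (hm' : C * m ^ (n - 1) ≤ m') : m ≤ β * m' * m := by
  refine le_mul_of_one_le_left (by linarith) ?_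
  calc 1 ≤ β * C * m ^ (n - 1) :=
        one_le_mul_of_one_le_of_one_le hC (Real.one_le_rpow hm (by linarith))
    _ = β * (C * m ^ (n - 1)) := mul_assoc _ _ _
    _ ≤ β * m' := by gcongr

end Scales

section NonTightness

variable {V : Type*} {G : SimpleGraph V} [DecidableRel G.Adj]

lemma exists_gibbs_lt_le_half (hconn : G.Connected) (hfin : ∀ v, (G.neighborSet v).Finite)
    {o : V} {n a β : ℝ} (hn : 2 < n) (ha : 0 ≤ a) (hβ : 0 < β) {ξ : V → ℝ}
    (hξ0 : ∀ v, 0 ≤ ξ v) (hξ : ∀ A : ℝ, 0 < A → ∃ z : V, A ^ ((n - 1) ^ G.dist o z) < ξ z)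
    (R : ℝ) :
    ∃ (Λ : Finset V) (ho : o ∈ Λ),
      gibbs (nearestNeighbour G) β (potentialMeasure fun u => a * |u| ^ n) Λ ξ
        {φ | φ ⟨o, ho⟩ < R} ≤ ENNReal.ofReal (1 / 2) := by
  set C := max 1 (a * 4 ^ n) / β
  have hβC : β * C = max 1 (a * 4 ^ n) := mul_div_cancel₀ _ hβ.ne'
  obtain ⟨m, A, hA, hm0, hm_ge, hm_succ, hmA⟩ :=
    exists_rapidly_growing_scales hn C (max R (ξ o))
  have hm_one (j : ℕ) : 1 ≤ m j := by linarith [hm_ge j, j.cast_nonneg (α := ℝ)]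
  obtain ⟨z, hz⟩ := hξ A hA
  obtain ⟨x, rfl, hxz, hx⟩ := exists_isInducedPath_of_reachable (hconn.preconnected o z)
  have hmz : m (G.dist (x 0) z) ≤ ξ z := (hmA _).trans hz.le
  have hdist : 0 < G.dist (x 0) z := by
    refine hconn.pos_dist_of_ne fun hoz => ?_
    rw [← hoz, SimpleGraph.dist_self] at hz
    exact ((le_max_right R _).trans (hm0.trans (hmA 0))).not_gt hz
  have h0 : x 0 ∈ (Finset.range (G.dist (x 0) z)).image x :=
    Finset.mem_image_of_mem x (Finset.mem_range.2 hdist)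
  refine ⟨_, h0, ?_⟩
  calc _ ≤ gibbs (nearestNeighbour G) β _ _ ξ {φ | φ ⟨x 0, h0⟩ < m 0} :=
        measure_mono fun φ hφ => lt_of_lt_of_le hφ ((le_max_left R _).trans hm0)
    _ ≤ ∑ j ∈ Finset.range _, ENNReal.ofReal (2 * Real.exp (-(2 * (β * m (j + 1) * m j)))) :=
        hx.gibbs_lt_le_sum hfin hξ0 hβ.le (isEvenPotential_abs_rpow ha n)
          (fun j => zero_le_one.trans (hm_one j))
          (fun j v hv => mul_abs_rpow_le_of_abs_le ha (by linarith) hβ.le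
            (one_pos.trans_le (hm_one j)) (hβC ▸ le_max_right _ _) (hm_succ j) hv)
          (hxz.symm ▸ hmz) h0
    _ ≤ ENNReal.ofReal (1 / 2) := sum_ofReal_two_mul_exp_le (fun j => (hm_ge j).trans
        (le_mul_mul_of_one_le (by linarith) hβ.le (hm_one j) (hβC ▸ le_max_left _ _)
          (hm_succ j))) _

theorem stmt9_general (hconn : G.Connected) (hfin : ∀ v, (G.neighborSet v).Finite)
    (o : V) {n a β : ℝ} (hn : 2 < n) (ha : 0 < a) (hβ : 0 < β) {ξ : V → ℝ}
    (hξ0 : ∀ v, 0 ≤ ξ v) (hξ : ∀ A : ℝ, 0 < A → ∃ z : V, A ^ ((n - 1) ^ G.dist o z) < ξ z) :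
    ∃ Λ' : Finset V, ¬ (∀ ε : ℝ, 0 < ε → ∃ K : Set (↥Λ' → ℝ), IsCompact K ∧
      ∀ (Λ : Finset V) (h : Λ' ⊆ Λ),
        ENNReal.ofReal (1 - ε) ≤ marg h (gibbs (nearestNeighbour G) β
          (potentialMeasure fun u => a * |u| ^ n) Λ ξ) K) := by
  refine ⟨{o}, fun htight => ?_⟩
  obtain ⟨K, hK, hKmass⟩ := htight (1 / 4) (by norm_num)
  obtain ⟨R, hR⟩ := hK.isBounded.exists_norm_le
  obtain ⟨Λ, ho, hΛ⟩ := exists_gibbs_lt_le_half hconn hfin hn ha.le hβ hξ0 hξ (R + 1)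
  have hsub : {o} ⊆ Λ := Finset.singleton_subset_iff.2 ho
  have hKsub : (fun (φ : ↥Λ → ℝ) (v : ↥({o} : Finset V)) => φ ⟨v.1, hsub v.2⟩) ⁻¹' K ⊆
      {φ | φ ⟨o, ho⟩ < R + 1} := fun φ hφ =>
    calc φ ⟨o, ho⟩ ≤ ‖φ ⟨o, ho⟩‖ := Real.le_norm_self _
      _ ≤ R := (norm_le_pi_norm _ ⟨o, Finset.mem_singleton_self o⟩).trans (hR _ hφ)
      _ < R + 1 := lt_add_one R
  have hmass := hKmass Λ hsub
  rw [marg, Measure.map_apply (by fun_prop) hK.measurableSet] at hmass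
  have hle := (hmass.trans (measure_mono hKsub)).trans hΛ
  rw [ENNReal.ofReal_le_ofReal_iff (by norm_num)] at hle
  norm_num at hle

end NonTightness

/-- Proposition `Anti-tightness prop`: non-tightness for fast-growing
non-negative boundary conditions. Let `n > 2`, `aT > 0`, `β > 0`,
`dρ(u) = e^(-aT|u|^n) du`, and let `G` be an infinite connected bounded-degree graph with
origin `o`, equipped with nearest-neighbour interactions. If `ξ ≥ 0` and
`ξ ∉ Ξ` (i.e. for every `A > 0` there is `z` with `ξ_z > A^((n-1)^{d_G(o,z)})`), then the
family `(ν^ξ_{Λ,β,ρ,J_G})_Λ` is not tight: there is a finite `Λ'` such that the family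
of `Λ'`-marginals over finite `Λ ⊇ Λ'` is not uniformly tight. -/
theorem stmt9 {V : Type*} (G : SimpleGraph V) [DecidableRel G.Adj] [Infinite V]
    (hconn : G.Connected) [∀ x : V, Fintype (G.neighborSet x)]
    (hbdd : ∃ D : ℕ, ∀ x : V, G.degree x ≤ D)
    (o : V) (n aT β : ℝ) (hn : 2 < n) (haT : 0 < aT) (hβ : 0 < β)
    (ξ : V → ℝ) (hξpos : ∀ x, 0 ≤ ξ x)
    (hξ : ∀ A : ℝ, 0 < A → ∃ z : V, A ^ ((n - 1) ^ G.dist o z) < ξ z) :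
    ∃ Λ' : Finset V, ¬ (∀ ε : ℝ, 0 < ε → ∃ K : Set (↥Λ' → ℝ), IsCompact K ∧
      ∀ (Λ : Finset V) (h : Λ' ⊆ Λ),
        ENNReal.ofReal (1 - ε) ≤
          marg h (gibbs (fun x y => if G.Adj x y then 1 else 0) β
            (volume.withDensity fun u => ENNReal.ofReal (Real.exp (-(aT * |u| ^ n))))
            Λ ξ) K) :=
  stmt9_general hconn (fun _ => Set.toFinite _) o hn haT hβ hξpos hξ
end

section
/- (Non-tightness for signed boundary conditions on ℤ.) Let n > 2, ã > 0, β > 0, let dρ(u) = e^{−ã|u|^n} du, and let G = (ℤ, {xy : |x − y| = 1}) with origin o = 0, equipped with the nearest-neighbour interactions J_G. Let ξ ∈ ℝ^ℤ be such that for every A ∈ (0,∞) there exists z ∈ ℤ with |ξ_z| > A^{(n−1)^{|z|}} (i.e. ξ ∉ Ξ). Then the family of measures (ν^ξ_{Λ,β,ρ,J_G})_{Λ finite ⊂ ℤ} is not tight: there exists a finite Λ' ⊂ ℤ such that the family of Λ'-marginals of ν^ξ_{Λ,β,ρ,J_G}, over finite Λ ⊇ Λ', is not uniformly tight. -/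
open MeasureTheory
open scoped ENNReal Classical

/-! Let `T 0 < T 1 < ⋯` be thresholds with `T (k + 1) ≥ B * T k ^ (n - 1)` for a large `B`; they can
be chosen below `A ^ ((n - 1) ^ k)`, so some boundary spin `ξ z` lies beyond `T |z|`. Take for `Λ`
the segment from the origin to the neighbour of `z`. If `|φ 0| < T 0`, then some bond of the segment
is an upcrossing: `|φ k| < T k` while `|φ (k + 1)| ≥ T (k + 1)`. Conditionally on the spins beyond
`k`, compare this event with the one where `φ k` has size in `[2 T k, 3 T k]` and the sign favoured
by `φ (k + 1)`, and the spins before it are in `[-1, 1]`: the latter gains at least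
`exp (|β| * T k * T (k + 1))` in interaction and pays only a multiple of `T k ^ n` in the exponent
for the single-spin density and the other bonds. Since `T k * T (k + 1) ≥ B * T k ^ n`, the
upcrossing at `k` has probability at most `r ^ (k + 1)` with `r` as small as desired, and summing
over `k` shows that the spin at the origin exceeds `T 0`, hence any prescribed size, with
probability close to one. -/

section PathEnergy

variable {w X : ℝ} {z : ℕ → ℝ} {k : ℕ}

/-- The energy `w z₀ + z₀ z₁ + ⋯ + z_{N-1} z_N` of a path of nearest-neighbour spins `z`, where `w`
is the boundary spin attached to `z₀`; it is the Hamiltonian of a half-line segment up to `β`. -/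
def pathEnergy (w : ℝ) (z : ℕ → ℝ) (N : ℕ) : ℝ :=
  w * z 0 + ∑ i ∈ Finset.range N, z i * z (i + 1)

lemma pathEnergy_eq_add_sum_Ico {N : ℕ} (hkN : k ≤ N) :
    pathEnergy w z N = pathEnergy w z k + ∑ i ∈ Finset.Ico k N, z i * z (i + 1) := by
  rw [pathEnergy, pathEnergy, ← Finset.sum_range_add_sum_Ico _ hkN, add_assoc]

lemma pathEnergy_succ : pathEnergy w z (k + 1) = pathEnergy w z k + z k * z (k + 1) := by
  rw [pathEnergy, pathEnergy, Finset.sum_range_succ, add_assoc]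

lemma sum_range_abs_mul_succ_le_sum_sq (z : ℕ → ℝ) (k : ℕ) :
    ∑ i ∈ Finset.range k, |z i * z (i + 1)| ≤ ∑ i ∈ Finset.range (k + 1), z i ^ 2 := by
  have amgm : ∀ a b : ℝ, |a * b| ≤ (a ^ 2 + b ^ 2) / 2 := fun a b ↦ by
    rw [abs_le]
    constructor <;> nlinarith [sq_nonneg (a - b), sq_nonneg (a + b)]
  calc ∑ i ∈ Finset.range k, |z i * z (i + 1)|
      ≤ ∑ i ∈ Finset.range k, (z i ^ 2 + z (i + 1) ^ 2) / 2 :=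
        Finset.sum_le_sum fun i _ ↦ amgm _ _
    _ = (∑ i ∈ Finset.range k, z i ^ 2 + ∑ i ∈ Finset.range k, z (i + 1) ^ 2) / 2 := by
        rw [← Finset.sum_div, Finset.sum_add_distrib]
    _ ≤ ∑ i ∈ Finset.range (k + 1), z i ^ 2 := by
        have first := Finset.sum_range_succ' (fun i ↦ z i ^ 2) k
        have last := Finset.sum_range_succ (fun i ↦ z i ^ 2) k
        linarith [sq_nonneg (z 0), sq_nonneg (z k)]

lemma abs_pathEnergy_le_sum (hw : |w| ≤ X) :
    |pathEnergy w z k| ≤ ∑ i ∈ Finset.range (k + 1), (z i ^ 2 + X * |z i|) := by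
  have hX : 0 ≤ X := (abs_nonneg w).trans hw
  have boundary : |w * z 0| ≤ ∑ i ∈ Finset.range (k + 1), X * |z i| :=
    calc |w * z 0| ≤ X * |z 0| := by rw [abs_mul]; gcongr
      _ ≤ _ := Finset.single_le_sum (f := fun i ↦ X * |z i|) (fun i _ ↦ by positivity)
          (Finset.mem_range.2 k.succ_pos)
  have bulk : |∑ i ∈ Finset.range k, z i * z (i + 1)| ≤ ∑ i ∈ Finset.range (k + 1), z i ^ 2 :=
    (Finset.abs_sum_le_sum_abs _ _).trans (sum_range_abs_mul_succ_le_sum_sq z k)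
  rw [Finset.sum_add_distrib]
  exact (abs_add_le _ _).trans (by linarith)

lemma abs_pathEnergy_le_of_abs_le {R : ℝ} (hw : |w| ≤ X) (hR : 1 ≤ R) (hz : ∀ i < k, |z i| ≤ 1)
    (hzk : |z k| ≤ R) : |pathEnergy w z k| ≤ R * (X + k) := by
  have hX : 0 ≤ X := (abs_nonneg w).trans hw
  have hzR : ∀ i ≤ k, |z i| ≤ R := fun i hi ↦
    hi.eq_or_lt.elim (fun h ↦ h ▸ hzk) fun h ↦ (hz i h).trans hR
  have boundary : |w * z 0| ≤ X * R := by
    rw [abs_mul]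
    gcongr
    exact hzR 0 k.zero_le
  have bond : ∀ i ∈ Finset.range k, |z i * z (i + 1)| ≤ R := fun i hi ↦ by
    have hik := Finset.mem_range.1 hi
    rw [abs_mul, ← one_mul R]
    exact mul_le_mul (hz i hik) (hzR _ hik) (abs_nonneg _) zero_le_one
  have bulk : |∑ i ∈ Finset.range k, z i * z (i + 1)| ≤ k * R := by
    simpa using (Finset.abs_sum_le_sum_abs _ _).trans (Finset.sum_le_sum bond)
  exact (abs_add_le _ _).trans (by linarith)

end PathEnergy

section LMarginal

variable {ι : Type*} [DecidableEq ι] {Ω : ι → Type*} [∀ i, MeasurableSpace (Ω i)]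
  {μ : ∀ i, Measure (Ω i)} {s : Finset ι}

lemma lmarginal_mul_of_dependsOn_compl {h f : (∀ i, Ω i) → ℝ≥0∞} (hh : DependsOn h (↑s)ᶜ)
    (hf : Measurable f) (x : ∀ i, Ω i) :
    (∫⋯∫⁻_s, (fun y ↦ h y * f y) ∂μ) x = h x * (∫⋯∫⁻_s, f ∂μ) x := by
  have h_const : ∀ y : ∀ i : s, Ω i, h (Function.updateFinset x s y) = h x := fun y ↦
    hh fun i hi ↦ dif_neg hi
  simp only [lmarginal, h_const]
  exact lintegral_const_mul _ (hf.comp measurable_updateFinset)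

lemma lmarginal_const_mul (c : ℝ≥0∞) {f : (∀ i, Ω i) → ℝ≥0∞} (hf : Measurable f)
    (x : ∀ i, Ω i) : (∫⋯∫⁻_s, (fun y ↦ c * f y) ∂μ) x = c * (∫⋯∫⁻_s, f ∂μ) x :=
  lmarginal_mul_of_dependsOn_compl ((dependsOn_const c).mono (Set.empty_subset _)) hf x

lemma lmarginal_prod [∀ i, SigmaFinite (μ i)] {g : ∀ i, Ω i → ℝ≥0∞} (hg : ∀ i, Measurable (g i))
    (x : ∀ i, Ω i) :
    (∫⋯∫⁻_s, (fun y ↦ ∏ i ∈ s, g i (y i)) ∂μ) x = ∏ i ∈ s, ∫⁻ u, g i u ∂μ i := by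
  have meas : ∀ t : Finset ι, Measurable fun y : ∀ i, Ω i ↦ ∏ i ∈ t, g i (y i) := fun t ↦
    Finset.measurable_fun_prod t fun i _ ↦ (hg i).comp (measurable_pi_apply i)
  induction s using Finset.induction_on with
  | empty => simp
  | insert j s hj ih =>
    have pull_out : (fun y : ∀ i, Ω i ↦
        ∫⁻ u, ∏ i ∈ insert j s, g i (Function.update y j u i) ∂μ j) =
        fun y ↦ (∫⁻ u, g j u ∂μ j) * ∏ i ∈ s, g i (y i) := by
      ext y
      simp only [Finset.prod_insert hj, Function.update_self]
      rw [← lintegral_mul_const _ (hg j)]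
      refine lintegral_congr fun u ↦ congrArg _ (Finset.prod_congr rfl fun i hi ↦ ?_)
      rw [Function.update_of_ne (ne_of_mem_of_not_mem hi hj)]
    rw [lmarginal_insert' _ (meas _) hj, pull_out, lmarginal_const_mul _ (meas s), ih,
      Finset.prod_insert hj]

lemma lmarginal_le_lmarginal_of_eq_off {f g : (∀ i, Ω i) → ℝ≥0∞} {x : ∀ i, Ω i}
    (hfg : ∀ y, (∀ i ∉ s, y i = x i) → f y ≤ g y) :
    (∫⋯∫⁻_s, f ∂μ) x ≤ (∫⋯∫⁻_s, g ∂μ) x :=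
  lintegral_mono fun _ ↦ hfg _ fun _ hi ↦ dif_neg hi

lemma mul_prod_measure_le_lmarginal [∀ i, SigmaFinite (μ i)] {S : ∀ i, Set (Ω i)}
    (hS : ∀ i, MeasurableSet (S i)) {c : ℝ≥0∞} {f : (∀ i, Ω i) → ℝ≥0∞} {x : ∀ i, Ω i}
    (hc : ∀ y, (∀ i ∈ s, y i ∈ S i) → (∀ i ∉ s, y i = x i) → c ≤ f y) :
    c * ∏ i ∈ s, μ i (S i) ≤ (∫⋯∫⁻_s, f ∂μ) x := by
  have meas : ∀ i, Measurable ((S i).indicator (1 : Ω i → ℝ≥0∞)) := fun i ↦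
    measurable_one.indicator (hS i)
  have meas_prod : Measurable fun y : ∀ i, Ω i ↦ ∏ i ∈ s, (S i).indicator (1 : Ω i → ℝ≥0∞) (y i) :=
    Finset.measurable_fun_prod s fun i _ ↦ (meas i).comp (measurable_pi_apply i)
  calc c * ∏ i ∈ s, μ i (S i)
      = (∫⋯∫⁻_s, (fun y ↦ c * ∏ i ∈ s, (S i).indicator 1 (y i)) ∂μ) x := by
        rw [lmarginal_const_mul _ meas_prod, lmarginal_prod meas]
        simp only [lintegral_indicator_one (hS _)]
    _ ≤ (∫⋯∫⁻_s, f ∂μ) x := lmarginal_le_lmarginal_of_eq_off fun y hyx ↦ ?_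
  by_cases hy : ∀ i ∈ s, y i ∈ S i
  · have one : ∏ i ∈ s, (S i).indicator 1 (y i) = (1 : ℝ≥0∞) :=
      Finset.prod_eq_one fun i hi ↦ Set.indicator_of_mem (hy i hi) 1
    simp only [one, mul_one]
    exact hc y hy hyx
  · push Not at hy
    obtain ⟨i, hi, hiS⟩ := hy
    have zero : ∏ i ∈ s, (S i).indicator 1 (y i) = (0 : ℝ≥0∞) :=
      Finset.prod_eq_zero hi (Set.indicator_of_notMem hiS 1)
    simp only [zero, mul_zero]
    exact zero_le

end LMarginal

section Gibbs

variable {V : Type*} {J : V → V → ℝ} {β : ℝ} {Λ : Finset V} {ξ : V → ℝ}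

lemma hamil_of_diag_eq_zero (hJ : ∀ x, J x x = 0) (φ : Λ → ℝ) :
    hamil J β Λ ξ φ = β * ∑ x : Λ, φ x *
      (1 / 2 * ∑ y : Λ, J x y * φ y + ∑' y : {y // y ∉ Λ}, J x y * ξ y) := by
  have drop_ne : ∀ x y : Λ, (if x.1 ≠ y.1 then J x y * φ x * φ y else 0) =
      φ x * (J x y * φ y) := fun x y ↦ by
    split_ifs with hxy
    · ring
    · rw [not_not.1 hxy, hJ]
      ring
  simp only [hamil, drop_ne, mul_add, Finset.sum_add_distrib, Finset.mul_sum]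
  ring_nf

lemma gibbs_preimage_updateFinset [DecidableEq V] {ρ : Measure ℝ} {H : (V → ℝ) → ℝ}
    (hJ : ∀ φ, hamil J β Λ ξ φ = H (Function.updateFinset ξ Λ φ)) {A : Set (V → ℝ)}
    (hA : MeasurableSet A) :
    gibbs J β ρ Λ ξ (Function.updateFinset ξ Λ ⁻¹' A) =
      ((∫⋯∫⁻_Λ, (fun ω ↦ ENNReal.ofReal (Real.exp (H ω))) ∂fun _ ↦ ρ) ξ)⁻¹ *
        (∫⋯∫⁻_Λ, A.indicator (fun ω ↦ ENNReal.ofReal (Real.exp (H ω))) ∂fun _ ↦ ρ) ξ := by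
  have hA' : MeasurableSet (Function.updateFinset ξ Λ ⁻¹' A) := measurable_updateFinset hA
  simp only [gibbs, hJ, Measure.smul_apply, smul_eq_mul]
  rw [withDensity_apply _ .univ, withDensity_apply _ hA', Measure.restrict_univ,
    ← lintegral_indicator hA']
  rfl

end Gibbs

section NearestNeighbor

/-- The nearest-neighbour interaction `J_G` on `ℤ`. -/
abbrev nearestNeighbor (x y : ℤ) : ℝ := if |x - y| = 1 then 1 else 0

/-- The `i`-th site `s * i` of the half-line of `ℤ` issued from the origin in the direction
`s = ±1`. -/
def raySite (s : ℤˣ) : ℕ ↪ ℤ where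
  toFun i := s * i
  inj' i j hij := by simpa using hij

variable (s : ℤˣ)

lemma raySite_apply (i : ℕ) : raySite s i = s * i := rfl

lemma raySite_zero : raySite s 0 = 0 := by simp [raySite_apply]

lemma raySite_succ (i : ℕ) : raySite s (i + 1) = raySite s i + s := by
  simp [raySite_apply, mul_add]

lemma neg_ne_raySite (i : ℕ) : -(s : ℤ) ≠ raySite s i := by
  rw [raySite_apply]
  rcases Int.units_eq_one_or s with rfl | rfl <;> (push_cast; omega)

lemma exists_eq_raySite_natAbs (z : ℤ) : ∃ s : ℤˣ, z = raySite s z.natAbs := by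
  rcases le_total 0 z with hz | hz
  · exact ⟨1, by simp [raySite_apply, abs_of_nonneg hz]⟩
  · exact ⟨-1, by simp [raySite_apply, abs_of_nonpos hz]⟩

lemma nearestNeighbor_eq (x y : ℤ) :
    nearestNeighbor x y = if y = x + s ∨ y = x - s then 1 else 0 := by
  refine if_congr ?_ rfl rfl
  rw [abs_eq zero_le_one]
  rcases Int.units_eq_one_or s with rfl | rfl <;> (push_cast; omega)

lemma tsum_subtype_nearestNeighbor_mul (A : Set ℤ) (f : ℤ → ℝ) (x : ℤ) :
    ∑' y : A, nearestNeighbor x y * f y = A.indicator f (x + s) + A.indicator f (x - s) := by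
  have hne : x + s ≠ x - s := by
    rcases Int.units_eq_one_or s with rfl | rfl <;> (push_cast; omega)
  rw [tsum_subtype A fun y ↦ nearestNeighbor x y * f y,
    tsum_eq_sum (s := {x + (s : ℤ), x - s}) fun y hy ↦ ?_, Finset.sum_pair hne]
  · simp [Set.indicator_apply, nearestNeighbor_eq s]
  · simp only [Finset.mem_insert, Finset.mem_singleton] at hy
    simp [Set.indicator_apply, nearestNeighbor_eq s, hy]

/-- The weight of the spin at `y` as seen from a site of `Λ`: a bond inside `Λ` is met from both
ends, one across the boundary only from its end in `Λ`. -/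
noncomputable def bondWeight (Λ : Finset ℤ) (y : ℤ) : ℝ := if y ∈ Λ then 1 / 2 else 1

lemma hamil_nearestNeighbor (β : ℝ) (Λ : Finset ℤ) (ξ : ℤ → ℝ) (φ : Λ → ℝ) :
    hamil nearestNeighbor β Λ ξ φ = β * ∑ x ∈ Λ, Function.updateFinset ξ Λ φ x *
      (bondWeight Λ (x + s) * Function.updateFinset ξ Λ φ (x + s) +
        bondWeight Λ (x - s) * Function.updateFinset ξ Λ φ (x - s)) := by
  set ω := Function.updateFinset ξ Λ φ with hω
  have inside : ∀ x : Λ, φ x = ω x := fun x ↦ by simp [hω, Function.updateFinset]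
  have outside : ∀ y : {y // y ∉ Λ}, ξ y = ω y := fun y ↦ by
    simp [hω, Function.updateFinset, y.2]
  have sum_inside : ∀ x : Λ, ∑ y : Λ, nearestNeighbor x y * φ y =
      (Λ : Set ℤ).indicator ω (x + s) + (Λ : Set ℤ).indicator ω (x - s) := fun x ↦ by
    simp only [inside, ← tsum_subtype_nearestNeighbor_mul]
    exact (tsum_fintype _).symm
  have sum_outside : ∀ x : Λ, ∑' y : {y // y ∉ Λ}, nearestNeighbor x y * ξ y =
      (Λ : Set ℤ)ᶜ.indicator ω (x + s) + (Λ : Set ℤ)ᶜ.indicator ω (x - s) := fun x ↦ by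
    simp only [outside]
    exact tsum_subtype_nearestNeighbor_mul s (Λ : Set ℤ)ᶜ ω x
  have combine : ∀ y, 1 / 2 * (Λ : Set ℤ).indicator ω y + (Λ : Set ℤ)ᶜ.indicator ω y =
      bondWeight Λ y * ω y := fun y ↦ by
    by_cases hy : y ∈ Λ <;> simp [bondWeight, hy]
  rw [hamil_of_diag_eq_zero fun x ↦ by simp, ← Finset.sum_coe_sort Λ]
  refine congrArg _ (Finset.sum_congr rfl fun x _ ↦ ?_)
  rw [sum_inside, sum_outside, inside, ← combine, ← combine]
  ring

lemma hamil_nearestNeighbor_ray (β : ℝ) {m : ℕ} {Λ : Finset ℤ}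
    (hΛ : Λ = (Finset.range (m + 1)).map (raySite s)) (ξ : ℤ → ℝ) (φ : Λ → ℝ) :
    hamil nearestNeighbor β Λ ξ φ =
      β * pathEnergy (ξ (-s)) (Function.updateFinset ξ Λ φ ∘ raySite s) (m + 1) := by
  set ω := Function.updateFinset ξ Λ φ with hω
  have weight_site : ∀ i, bondWeight Λ (raySite s i) = if i < m + 1 then 1 / 2 else 1 := fun i ↦ by
    simp [bondWeight, hΛ]
  have origin_mem : -(s : ℤ) ∉ Λ := by
    simpa [hΛ] using fun i _ ↦ (neg_ne_raySite s i).symm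
  have weight_neg : bondWeight Λ (-s) * ω (-s) = ξ (-s) := by
    simp [bondWeight, origin_mem, hω, Function.updateFinset]
  have forward : ∑ i ∈ Finset.range (m + 1), ω (raySite s i) *
      (bondWeight Λ (raySite s i + s) * ω (raySite s i + s)) =
      1 / 2 * ∑ i ∈ Finset.range m, ω (raySite s i) * ω (raySite s (i + 1)) +
        ω (raySite s m) * ω (raySite s (m + 1)) := by
    simp only [← raySite_succ, weight_site]
    rw [Finset.sum_range_succ, Finset.mul_sum, if_neg (lt_irrefl _), one_mul]
    refine congrArg (· + _) (Finset.sum_congr rfl fun i hi ↦ ?_)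
    rw [if_pos (Nat.succ_lt_succ (Finset.mem_range.1 hi))]
    ring
  have backward : ∑ i ∈ Finset.range (m + 1), ω (raySite s i) *
      (bondWeight Λ (raySite s i - s) * ω (raySite s i - s)) =
      1 / 2 * ∑ i ∈ Finset.range m, ω (raySite s i) * ω (raySite s (i + 1)) +
        ξ (-s) * ω (raySite s 0) := by
    simp only [Finset.sum_range_succ', raySite_succ, add_sub_cancel_right, weight_site,
      raySite_zero, zero_sub, weight_neg]
    rw [Finset.mul_sum, mul_comm (ξ _)]
    refine congrArg (· + _) (Finset.sum_congr rfl fun i hi ↦ ?_)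
    rw [if_pos ((Finset.mem_range.1 hi).trans m.lt_succ_self)]
    ring
  have sum_sites : ∀ g : ℤ → ℝ, ∑ x ∈ Λ, g x = ∑ i ∈ Finset.range (m + 1), g (raySite s i) :=
    fun g ↦ by rw [hΛ, Finset.sum_map]
  rw [hamil_nearestNeighbor s, ← hω, sum_sites]
  simp only [mul_add, Finset.sum_add_distrib, forward, backward]
  simp only [pathEnergy, Function.comp_apply, Finset.sum_range_succ]
  ring

end NearestNeighbor

section SpinMeasure

/-- The single-spin measure `dρ(u) = e^{-a|u|^n} du`. -/
noncomputable abbrev powerSpin (a n : ℝ) : Measure ℝ :=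
  volume.withDensity fun u ↦ ENNReal.ofReal (Real.exp (-(a * |u| ^ n)))

variable {a n : ℝ}

lemma ofReal_exp_neg_le_powerSpin (ha : 0 ≤ a) (hn : 0 ≤ n) {r : ℝ} {S : Set ℝ}
    (hS : MeasurableSet S) (hvol : 1 ≤ volume S) (hr : ∀ u ∈ S, |u| ≤ r) :
    ENNReal.ofReal (Real.exp (-(a * r ^ n))) ≤ powerSpin a n S :=
  calc ENNReal.ofReal (Real.exp (-(a * r ^ n)))
      ≤ ENNReal.ofReal (Real.exp (-(a * r ^ n))) * volume S := le_mul_of_one_le_right zero_le hvol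
    _ = ∫⁻ _ in S, ENNReal.ofReal (Real.exp (-(a * r ^ n))) := (setLIntegral_const _ _).symm
    _ ≤ ∫⁻ u in S, ENNReal.ofReal (Real.exp (-(a * |u| ^ n))) := by
        refine setLIntegral_mono' hS fun u hu ↦ ?_
        gcongr
        exact hr u hu
    _ = powerSpin a n S := (withDensity_apply _ hS).symm

lemma exists_mul_sq_sub_rpow_le (ha : 0 < a) (hn : 2 < n) (b : ℝ) :
    ∃ c, ∀ u : ℝ, b * u ^ 2 - a * |u| ^ n ≤ c - u ^ 2 := by
  obtain ⟨r, hr⟩ : ∃ r, ∀ v ≥ r, b + 1 ≤ a * v ^ (n - 2) :=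
    Filter.eventually_atTop.1 (((tendsto_rpow_atTop (sub_pos.2 hn)).const_mul_atTop
      ha).eventually_ge_atTop (b + 1))
  refine ⟨|b + 1| * r ^ 2, fun u ↦ ?_⟩
  have split : |u| ^ n = |u| ^ (n - 2) * u ^ 2 := by
    rw [← sq_abs u, ← Real.rpow_two, ← Real.rpow_add_of_nonneg (abs_nonneg u) (by linarith)
      zero_le_two, sub_add_cancel]
  rcases le_total |u| r with hu | hu
  · have hu2 : u ^ 2 ≤ r ^ 2 := sq_le_sq.2 (hu.trans (le_abs_self r))
    have small : (b + 1) * u ^ 2 ≤ |b + 1| * r ^ 2 := by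
      gcongr
      exact le_abs_self _
    have : 0 ≤ a * |u| ^ n := by positivity
    linarith
  · have large : (b + 1) * u ^ 2 ≤ a * |u| ^ n := by
      rw [split, ← mul_assoc]
      gcongr
      exact hr _ hu
    have : 0 ≤ |b + 1| * r ^ 2 := by positivity
    linarith

lemma lintegral_exp_powerSpin_lt_top (ha : 0 < a) (hn : 2 < n) {b X : ℝ} (hbX : 0 ≤ b * X) :
    ∫⁻ u, ENNReal.ofReal (Real.exp (b * (u ^ 2 + X * |u|))) ∂powerSpin a n < ∞ := by
  obtain ⟨c, hc⟩ := exists_mul_sq_sub_rpow_le ha hn (b + b * X)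
  have exponent_le : ∀ u : ℝ, -(a * |u| ^ n) + b * (u ^ 2 + X * |u|) ≤ b * X + c - u ^ 2 :=
    fun u ↦ by
      have : b * X * |u| ≤ b * X * (1 + u ^ 2) := by
        gcongr
        nlinarith [sq_abs u, sq_nonneg (|u| - 1)]
      linarith [hc u]
  have gaussian : Integrable fun u : ℝ ↦ Real.exp (b * X + c - u ^ 2) := by
    simpa [sub_eq_add_neg, Real.exp_add] using
      (integrable_exp_neg_mul_sq one_pos).const_mul (Real.exp (b * X + c))
  rw [lintegral_withDensity_eq_lintegral_mul _ (by fun_prop) (by fun_prop)]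
  refine (lintegral_mono fun u ↦ ?_).trans_lt gaussian.lintegral_lt_top
  rw [Pi.mul_apply, ← ENNReal.ofReal_mul (Real.exp_pos _).le, ← Real.exp_add]
  gcongr
  exact exponent_le u

lemma exists_le_ofReal_exp {x : ℝ≥0∞} (hx : x < ∞) : ∃ c, x ≤ ENNReal.ofReal (Real.exp c) :=
  ⟨x.toReal, (ENNReal.ofReal_toReal hx.ne).symm.le.trans <| ENNReal.ofReal_le_ofReal <| by
    linarith [Real.add_one_le_exp x.toReal]⟩

end SpinMeasure

section Thresholds

lemma exists_lt_and_le_succ {α : Type*} [LinearOrder α] {g T : ℕ → α} {N : ℕ} (h0 : g 0 < T 0)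
    (hN : T N ≤ g N) : ∃ k < N, g k < T k ∧ T (k + 1) ≤ g (k + 1) := by
  by_contra! no_crossing
  have below : ∀ k ≤ N, g k < T k := fun k ↦ by
    induction k with
    | zero => exact fun _ ↦ h0
    | succ k ih => exact fun hk ↦ no_crossing k hk (ih (Nat.le_of_succ_le hk))
  exact (below N le_rfl).not_ge hN

/-- A sequence of spin sizes growing like `T ↦ B * T ^ (n - 1)` and at least linearly with slope
`E`; the energy gained by raising a spin next to a spin beyond the next threshold is controlled
by `B`, and `E` bounds the costs per site. -/
structure IsThresholdLadder (n B E : ℝ) (T : ℕ → ℝ) : Prop where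
  one_le : ∀ k, 1 ≤ T k
  mul_rpow_le : ∀ k, B * T k ^ (n - 1) ≤ T (k + 1)
  succ_mul_le : ∀ k : ℕ, (k + 1) * E ≤ T k

lemma exists_isThresholdLadder {n : ℝ} (hn : 2 < n) (B E M : ℝ) :
    ∃ A > 0, ∃ T : ℕ → ℝ, IsThresholdLadder n B E T ∧ M < T 0 ∧
      ∀ k, T k ≤ A ^ ((n - 1) ^ k) := by
  obtain ⟨b, hb1, hb⟩ : ∃ b : ℝ, 1 ≤ b ∧ max B 2 ≤ b ^ (n - 2) :=
    ((Filter.eventually_ge_atTop 1).and <|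
      (tendsto_rpow_atTop (sub_pos.2 hn)).eventually_ge_atTop (max B 2)).exists
  have hb0 : 0 < b := by linarith
  set t := max 1 (max E (M + 1))
  have ht1 : 1 ≤ t := le_max_left _ _
  have htE : E ≤ t := (le_max_left _ _).trans (le_max_right _ _)
  have htM : M + 1 ≤ t := (le_max_right _ _).trans (le_max_right _ _)
  set T : ℕ → ℝ := fun k ↦ (b * t) ^ ((n - 1) ^ k) / b with hT
  have T_zero : T 0 = t := by simp [hT, hb0.ne']
  have T_pos : ∀ k, 0 < T k := fun k ↦ by positivity
  have T_succ : ∀ k, T (k + 1) = b ^ (n - 2) * T k ^ (n - 1) := fun k ↦ by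
    simp only [hT]
    rw [Real.div_rpow (by positivity) hb0.le, ← Real.rpow_mul (by positivity), ← pow_succ,
      mul_div_assoc', mul_comm (b ^ (n - 2)), mul_div_assoc, ← Real.rpow_sub hb0]
    norm_num [Real.rpow_neg_one, div_eq_mul_inv]
  have T_ge : ∀ k : ℕ, (k + 1) * t ≤ T k := fun k ↦ by
    induction k with
    | zero => simp [T_zero]
    | succ k ih =>
      have hT1 : 1 ≤ T k := by nlinarith [(Nat.cast_nonneg k : (0 : ℝ) ≤ k)]
      have double : 2 * T k ≤ T (k + 1) := by
        rw [T_succ]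
        gcongr
        · exact (le_max_right _ _).trans hb
        · exact Real.self_le_rpow_of_one_le hT1 (by linarith)
      push_cast
      nlinarith [(Nat.cast_nonneg k : (0 : ℝ) ≤ k)]
  refine ⟨b * t, by positivity, T, ⟨fun k ↦ ?_, fun k ↦ ?_, fun k ↦ ?_⟩, by linarith, fun k ↦
    div_le_self (by positivity) hb1⟩
  · nlinarith [T_ge k, (Nat.cast_nonneg k : (0 : ℝ) ≤ k)]
  · rw [T_succ]
    have := (T_pos k).le
    gcongr
    exact (le_max_left _ _).trans hb
  · exact (by gcongr : ((k : ℝ) + 1) * E ≤ (k + 1) * t).trans (T_ge k)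

end Thresholds

section PathWeight

variable {V : Type*} {β w X : ℝ} {e : ℕ ↪ V} {k : ℕ}

/-- The event that the size of the spins along the path `e` jumps from below the threshold `T k` to
above the next one across the `k`-th bond. -/
def upcrossing (e : ℕ ↪ V) (T : ℕ → ℝ) (k : ℕ) : Set (V → ℝ) :=
  {ω | |ω (e k)| < T k} ∩ {ω | T (k + 1) ≤ |ω (e (k + 1))|}

lemma measurableSet_abs_lt (x : V) (T : ℝ) : MeasurableSet {ω : V → ℝ | |ω x| < T} :=
  measurableSet_lt (by fun_prop) measurable_const

lemma measurableSet_upcrossing (e : ℕ ↪ V) (T : ℕ → ℝ) (k : ℕ) :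
    MeasurableSet (upcrossing e T k) :=
  (measurableSet_abs_lt _ _).inter (measurableSet_le measurable_const (by fun_prop))

lemma lmarginal_indicator_abs_lt_le_sum_upcrossing [DecidableEq V] {μ : Measure ℝ} {e : ℕ ↪ V}
    {T : ℕ → ℝ} {N : ℕ} {η : V → ℝ} (hη : T N ≤ |η (e N)|) {f : (V → ℝ) → ℝ≥0∞}
    (hf : Measurable f) :
    (∫⋯∫⁻_(Finset.range N).map e, {ω | |ω (e 0)| < T 0}.indicator f ∂fun _ ↦ μ) η ≤
      ∑ k ∈ Finset.range N,
        (∫⋯∫⁻_(Finset.range N).map e, (upcrossing e T k).indicator f ∂fun _ ↦ μ) η := by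
  have cover : ∀ ω : V → ℝ, (∀ x ∉ (Finset.range N).map e, ω x = η x) →
      {ω | |ω (e 0)| < T 0}.indicator f ω ≤
        ∑ k ∈ Finset.range N, (upcrossing e T k).indicator f ω := fun ω hω ↦ by
    refine Set.indicator_apply_le' (fun h0 ↦ ?_) fun _ ↦ zero_le
    obtain ⟨k, hkN, hk⟩ := exists_lt_and_le_succ (g := fun i ↦ |ω (e i)|) h0
      (by rwa [hω (e N) (by simp)])
    calc f ω = (upcrossing e T k).indicator f ω :=
          (Set.indicator_of_mem (s := upcrossing e T k) hk f).symm
      _ ≤ _ := Finset.single_le_sum (f := fun k ↦ (upcrossing e T k).indicator f ω)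
          (fun _ _ ↦ zero_le) (Finset.mem_range.2 hkN)
  refine (lmarginal_le_lmarginal_of_eq_off cover).trans_eq (lintegral_finsetSum _ fun k _ ↦ ?_)
  exact (hf.indicator (measurableSet_upcrossing e T k)).comp measurable_updateFinset

/-- The Gibbs weight of the path `e` of sites up to `e N`, the boundary spin `w` being attached to
`e 0`. -/
noncomputable def pathWeight (β w : ℝ) (e : ℕ ↪ V) (N : ℕ) (ω : V → ℝ) : ℝ≥0∞ :=
  ENNReal.ofReal (Real.exp (β * pathEnergy w (ω ∘ e) N))

lemma measurable_pathWeight (β w : ℝ) (e : ℕ ↪ V) (N : ℕ) :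
    Measurable (pathWeight β w e N) := by
  unfold pathWeight pathEnergy
  fun_prop

lemma pathWeight_le_mul_prod {ω : V → ℝ} {T : ℝ} (hw : |w| ≤ X) (hT : |ω (e k)| ≤ T) :
    pathWeight β w e (k + 1) ω ≤ ENNReal.ofReal (Real.exp (|β| * (T * |ω (e (k + 1))|))) *
      ∏ x ∈ (Finset.range (k + 1)).map e,
        ENNReal.ofReal (Real.exp (|β| * (ω x ^ 2 + X * |ω x|))) := by
  have last_bond : |ω (e k) * ω (e (k + 1))| ≤ T * |ω (e (k + 1))| := by
    rw [abs_mul]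
    gcongr
  have energy : |pathEnergy w (ω ∘ e) (k + 1)| ≤ T * |ω (e (k + 1))| +
      ∑ i ∈ Finset.range (k + 1), (ω (e i) ^ 2 + X * |ω (e i)|) := by
    rw [pathEnergy_succ, add_comm]
    exact (abs_add_le _ _).trans (add_le_add last_bond (abs_pathEnergy_le_sum hw))
  rw [Finset.prod_map, ← ENNReal.ofReal_prod_of_nonneg fun i _ ↦ (Real.exp_pos _).le,
    ← Real.exp_sum, ← ENNReal.ofReal_mul (Real.exp_pos _).le, ← Real.exp_add, ← Finset.mul_sum,
    ← mul_add]
  refine ENNReal.ofReal_le_ofReal (Real.exp_le_exp.2 ((le_abs_self _).trans ?_))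
  rw [abs_mul]
  gcongr

lemma le_pathWeight {ω : V → ℝ} {m R : ℝ} (hw : |w| ≤ X) (hR : 1 ≤ R)
    (hω : ∀ i < k, |ω (e i)| ≤ 1) (hk : |ω (e k)| ≤ R)
    (hm : m ≤ β * (ω (e k) * ω (e (k + 1)))) :
    ENNReal.ofReal (Real.exp (m - |β| * (R * (X + k)))) ≤ pathWeight β w e (k + 1) ω := by
  have energy : |β * pathEnergy w (ω ∘ e) k| ≤ |β| * (R * (X + k)) := by
    rw [abs_mul]
    gcongr
    exact abs_pathEnergy_le_of_abs_le hw hR hω hk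
  refine ENNReal.ofReal_le_ofReal (Real.exp_le_exp.2 ?_)
  rw [pathEnergy_succ, mul_add]
  simp only [Function.comp_apply]
  linarith [neg_le_of_abs_le energy]

/-- The Gibbs weight of the bonds of the path `e` between `e j` and `e N`. -/
noncomputable def tailWeight (β : ℝ) (e : ℕ ↪ V) (j N : ℕ) (ω : V → ℝ) : ℝ≥0∞ :=
  ENNReal.ofReal (Real.exp (β * ∑ i ∈ Finset.Ico j N, ω (e i) * ω (e (i + 1))))

lemma pathWeight_eq_tailWeight_mul {j N : ℕ} (hjN : j ≤ N) :
    pathWeight β w e N = fun ω ↦ tailWeight β e j N ω * pathWeight β w e j ω := by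
  ext ω
  rw [pathWeight, pathEnergy_eq_add_sum_Ico hjN, mul_add, add_comm, Real.exp_add,
    ENNReal.ofReal_mul (Real.exp_pos _).le]
  rfl

lemma dependsOn_tailWeight (j N : ℕ) :
    DependsOn (tailWeight β e j N) (((Finset.range j).map e : Set V)ᶜ) := fun ω ω' hω ↦ by
  have agree : ∀ i, j ≤ i → ω (e i) = ω' (e i) := fun i hi ↦ hω _ (by simpa using hi)
  refine congrArg (fun x ↦ ENNReal.ofReal (Real.exp (β * x))) (Finset.sum_congr rfl fun i hi ↦ ?_)
  have hji := (Finset.mem_Ico.1 hi).1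
  rw [agree i hji, agree (i + 1) (hji.trans i.le_succ)]

variable [DecidableEq V] {ρ : Measure ℝ} [SigmaFinite ρ] {η : V → ℝ}

lemma lmarginal_indicator_pathWeight_le {c T : ℝ} (hw : |w| ≤ X)
    (hc : ∫⁻ u, ENNReal.ofReal (Real.exp (|β| * (u ^ 2 + X * |u|))) ∂ρ ≤
      ENNReal.ofReal (Real.exp c)) :
    (∫⋯∫⁻_(Finset.range (k + 1)).map e,
        {ω | |ω (e k)| < T}.indicator (pathWeight β w e (k + 1)) ∂fun _ ↦ ρ) η ≤
      ENNReal.ofReal (Real.exp (|β| * (T * |η (e (k + 1))|) + (k + 1) * c)) := by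
  set t := |η (e (k + 1))|
  set g : ℝ → ℝ≥0∞ := fun u ↦ ENNReal.ofReal (Real.exp (|β| * (u ^ 2 + X * |u|)))
  have meas_prod : Measurable fun ω : V → ℝ ↦
      ∏ x ∈ (Finset.range (k + 1)).map e, g (ω x) := by
    fun_prop
  calc _ ≤ (∫⋯∫⁻_(Finset.range (k + 1)).map e, (fun ω ↦ ENNReal.ofReal (Real.exp (|β| * (T * t))) *
        ∏ x ∈ (Finset.range (k + 1)).map e, g (ω x)) ∂fun _ ↦ ρ) η := by
        refine lmarginal_le_lmarginal_of_eq_off fun ω hω ↦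
          Set.indicator_apply_le' (fun hT ↦ ?_) fun _ ↦ zero_le
        have outside : |ω (e (k + 1))| = t := congrArg abs (hω _ (by simp))
        exact outside ▸ pathWeight_le_mul_prod hw (le_of_lt hT)
    _ = ENNReal.ofReal (Real.exp (|β| * (T * t))) * (∫⁻ u, g u ∂ρ) ^ (k + 1) := by
        rw [lmarginal_const_mul _ meas_prod, lmarginal_prod fun _ ↦ by fun_prop]
        simp
    _ ≤ ENNReal.ofReal (Real.exp (|β| * (T * t))) * ENNReal.ofReal (Real.exp c) ^ (k + 1) := by
        gcongr
    _ = _ := by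
        rw [← ENNReal.ofReal_pow (Real.exp_pos _).le, ← Real.exp_nat_mul,
          ← ENNReal.ofReal_mul (Real.exp_pos _).le, ← Real.exp_add]
        push_cast
        rfl

lemma ofReal_exp_sub_le_mul {a b : ℝ} {p q : ℝ≥0∞} {k : ℕ} (m : ℝ)
    (hp : ENNReal.ofReal (Real.exp (-a)) ≤ p) (hq : ENNReal.ofReal (Real.exp (-b)) ≤ q) :
    ENNReal.ofReal (Real.exp (m - (k * a + b))) ≤ ENNReal.ofReal (Real.exp m) * (p ^ k * q) :=
  calc _ = ENNReal.ofReal (Real.exp m) *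
        (ENNReal.ofReal (Real.exp (-a)) ^ k * ENNReal.ofReal (Real.exp (-b))) := by
        rw [← ENNReal.ofReal_pow (Real.exp_pos _).le, ← Real.exp_nat_mul,
          ← ENNReal.ofReal_mul (Real.exp_pos _).le, ← ENNReal.ofReal_mul (Real.exp_pos _).le,
          ← Real.exp_add, ← Real.exp_add]
        ring_nf
    _ ≤ _ := by gcongr

lemma le_lmarginal_pathWeight {a b m R : ℝ} {S : Set ℝ} (hw : |w| ≤ X) (hR : 1 ≤ R)
    (ha : ENNReal.ofReal (Real.exp (-a)) ≤ ρ (Set.Icc (-1) 1)) (hS : MeasurableSet S)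
    (hb : ENNReal.ofReal (Real.exp (-b)) ≤ ρ S)
    (hSR : ∀ u ∈ S, |u| ≤ R ∧ m ≤ β * η (e (k + 1)) * u) :
    ENNReal.ofReal (Real.exp (m - |β| * (R * (X + k)) - (k * a + b))) ≤
      (∫⋯∫⁻_(Finset.range (k + 1)).map e, pathWeight β w e (k + 1) ∂fun _ ↦ ρ) η := by
  set box : V → Set ℝ := fun x ↦ if x = e k then S else Set.Icc (-1) 1 with hbox
  have box_last : box (e k) = S := if_pos rfl
  have box_of_lt : ∀ i < k, box (e i) = Set.Icc (-1) 1 := fun i hi ↦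
    if_neg (e.injective.ne hi.ne)
  have box_measurable : ∀ x, MeasurableSet (box x) := fun x ↦ by
    simp only [hbox]
    split_ifs
    exacts [hS, measurableSet_Icc]
  have weight_ge : ∀ ω : V → ℝ, (∀ x ∈ (Finset.range (k + 1)).map e, ω x ∈ box x) →
      (∀ x ∉ (Finset.range (k + 1)).map e, ω x = η x) →
      ENNReal.ofReal (Real.exp (m - |β| * (R * (X + k)))) ≤ pathWeight β w e (k + 1) ω := by
    intro ω hω hωη
    have in_box : ∀ i ≤ k, ω (e i) ∈ box (e i) := fun i hi ↦ hω _ (by simpa using by omega)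
    have in_S : ω (e k) ∈ S := box_last ▸ in_box k le_rfl
    have small : ∀ i < k, |ω (e i)| ≤ 1 := fun i hi ↦ abs_le.2 <| Set.mem_Icc.1 <|
      box_of_lt i hi ▸ in_box i hi.le
    have outside : ω (e (k + 1)) = η (e (k + 1)) := hωη _ (by simp)
    refine le_pathWeight hw hR small (hSR _ in_S).1 ?_
    rw [outside]
    linarith [(hSR _ in_S).2]
  refine le_trans ?_ (mul_prod_measure_le_lmarginal box_measurable weight_ge)
  rw [Finset.prod_map, Finset.prod_range_succ, box_last,
    Finset.prod_congr rfl fun i hi ↦ by rw [box_of_lt i (Finset.mem_range.1 hi)],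
    Finset.prod_const, Finset.card_range]
  exact ofReal_exp_sub_le_mul _ ha hb

lemma lmarginal_indicator_upcrossing_le {N : ℕ} (hkN : k < N) {T : ℕ → ℝ} {r : ℝ≥0∞}
    (hblock : ∀ η : V → ℝ, T (k + 1) ≤ |η (e (k + 1))| →
      (∫⋯∫⁻_(Finset.range (k + 1)).map e,
        {ω | |ω (e k)| < T k}.indicator (pathWeight β w e (k + 1)) ∂fun _ ↦ ρ) η ≤
      r * (∫⋯∫⁻_(Finset.range (k + 1)).map e, pathWeight β w e (k + 1) ∂fun _ ↦ ρ) η) :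
    (∫⋯∫⁻_(Finset.range N).map e, (upcrossing e T k).indicator (pathWeight β w e N) ∂fun _ ↦ ρ) η ≤
      r * (∫⋯∫⁻_(Finset.range N).map e, pathWeight β w e N ∂fun _ ↦ ρ) η := by
  set near : Set (V → ℝ) := {ω | |ω (e k)| < T k}
  set far : Set (V → ℝ) := {ω | T (k + 1) ≤ |ω (e (k + 1))|} with hfar
  set h := tailWeight β e (k + 1) N
  have near_measurable : MeasurableSet near := measurableSet_abs_lt _ _
  have block_measurable := measurable_pathWeight β w e (k + 1)
  have path_measurable := measurable_pathWeight β w e N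
  have weight_eq : pathWeight β w e N = fun ω ↦ h ω * pathWeight β w e (k + 1) ω :=
    pathWeight_eq_tailWeight_mul hkN
  have crossing_eq : (upcrossing e T k).indicator (pathWeight β w e N) =
      fun ω ↦ far.indicator h ω * near.indicator (pathWeight β w e (k + 1)) ω := by
    rw [weight_eq, upcrossing, Set.inter_comm]
    exact funext fun ω ↦ Set.inter_indicator_mul h _ ω
  have far_dependsOn : DependsOn (far.indicator h) (((Finset.range (k + 1)).map e : Set V)ᶜ) :=
    fun ω ω' hω ↦ by
      simp only [Set.indicator_apply, hfar, Set.mem_ofPred_eq, hω (e (k + 1)) (by simp),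
        h, dependsOn_tailWeight (k + 1) N hω]
  have block_subset : (Finset.range (k + 1)).map e ⊆ (Finset.range N).map e :=
    Finset.map_subset_map.2 (Finset.range_subset_range.2 hkN)
  refine (lmarginal_le_of_subset block_subset
    (path_measurable.indicator (measurableSet_upcrossing e T k))
    (path_measurable.const_mul r) (fun η' ↦ ?_) η).trans_eq
    (lmarginal_const_mul r path_measurable η)
  rw [lmarginal_const_mul r path_measurable, crossing_eq, weight_eq,
    lmarginal_mul_of_dependsOn_compl far_dependsOn (block_measurable.indicator near_measurable),
    lmarginal_mul_of_dependsOn_compl (dependsOn_tailWeight _ _) block_measurable, mul_left_comm]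
  by_cases hη' : η' ∈ far
  · rw [Set.indicator_of_mem hη']
    gcongr
    exact hblock η' hη'
  · simp [hη']

end PathWeight

section Ladder

/-- The ratio `T (k + 1) / (T k) ^ (n - 1)` of thresholds for which the interaction energy gained by
raising a spin to a multiple of `T k` next to a spin of size `T (k + 1)` beats its cost. -/
noncomputable def growthRate (β a n X : ℝ) : ℝ := (1 + a * 3 ^ n + 3 * |β| * (X + 1)) / |β|

lemma exponent_add_le {n a β X T t c l : ℝ} {k : ℕ} (hn : 2 ≤ n) (ha : 0 ≤ a) (hβ : β ≠ 0)
    (hX : 0 ≤ X) (hT : 1 ≤ T) (hkT : (k + 1) * (|c + l| + a + 1) ≤ T)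
    (ht : growthRate β a n X * T ^ (n - 1) ≤ t) :
    |β| * (T * t) + (k + 1) * c + (k + 1) * l ≤
      2 * T * (|β| * t) - |β| * (3 * T * (X + k)) - (k * a + a * (3 * T) ^ n) := by
  have hβ' : 0 < |β| := abs_pos.2 hβ
  have hk : (0 : ℝ) ≤ k := k.cast_nonneg
  have sq_le : T * T ≤ T ^ n := by
    rw [← sq, ← Real.rpow_two]
    exact Real.rpow_le_rpow_of_exponent_le hT hn
  have self_le : T ≤ T ^ n := (le_mul_of_one_le_left (by linarith) hT).trans sq_le
  have k_le : k ≤ T := by nlinarith [abs_nonneg (c + l), hk]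
  have gain : (1 + a * 3 ^ n + 3 * |β| * (X + 1)) * T ^ n ≤ |β| * (T * t) := by
    calc (1 + a * 3 ^ n + 3 * |β| * (X + 1)) * T ^ n
        = |β| * (T * (growthRate β a n X * T ^ (n - 1))) := by
          rw [growthRate, Real.rpow_sub_one (by linarith)]
          field_simp
      _ ≤ |β| * (T * t) := by gcongr
  have cost_entropy : (k + 1) * (c + l) + k * a ≤ T ^ n := by
    nlinarith [le_abs_self (c + l), abs_nonneg (c + l)]
  have cost_spin : a * (3 * T) ^ n = a * 3 ^ n * T ^ n := by
    rw [Real.mul_rpow (by norm_num) (by linarith), mul_assoc]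
  have cost_energy : |β| * (3 * T * (X + k)) ≤ 3 * |β| * (X + 1) * T ^ n := by
    have : T * (X + k) ≤ (X + 1) * T ^ n := by nlinarith
    nlinarith
  linarith

lemma exists_aligned_set {T : ℝ} (hT : 1 ≤ T) (c : ℝ) :
    ∃ S : Set ℝ, MeasurableSet S ∧ 1 ≤ volume S ∧ ∀ u ∈ S, |u| ≤ 3 * T ∧ 2 * T * |c| ≤ c * u := by
  rcases le_total 0 c with hc | hc
  · refine ⟨Set.Icc (2 * T) (3 * T), measurableSet_Icc, ?_, fun u hu ↦ ⟨?_, ?_⟩⟩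
    · rw [Real.volume_Icc, ENNReal.one_le_ofReal]
      linarith
    · exact abs_le.2 ⟨by linarith [hu.1], hu.2⟩
    · rw [abs_of_nonneg hc]
      nlinarith [hu.1]
  · refine ⟨Set.Icc (-(3 * T)) (-(2 * T)), measurableSet_Icc, ?_, fun u hu ↦ ⟨?_, ?_⟩⟩
    · rw [Real.volume_Icc, ENNReal.one_le_ofReal]
      linarith
    · exact abs_le.2 ⟨hu.1, by linarith [hu.2]⟩
    · rw [abs_of_nonpos hc]
      nlinarith [hu.2]

variable {V : Type*} [DecidableEq V] {e : ℕ ↪ V} {n a β X w c l : ℝ}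

lemma lmarginal_powerSpin_indicator_le (hn : 2 ≤ n) (ha : 0 ≤ a) (hβ : β ≠ 0) (hw : |w| ≤ X)
    (hc : ∫⁻ u, ENNReal.ofReal (Real.exp (|β| * (u ^ 2 + X * |u|))) ∂powerSpin a n ≤
      ENNReal.ofReal (Real.exp c)) {k : ℕ} {T : ℝ} (hT : 1 ≤ T)
    (hkT : (k + 1) * (|c + l| + a + 1) ≤ T) {η : V → ℝ}
    (hη : growthRate β a n X * T ^ (n - 1) ≤ |η (e (k + 1))|) :
    (∫⋯∫⁻_(Finset.range (k + 1)).map e,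
        {ω | |ω (e k)| < T}.indicator (pathWeight β w e (k + 1)) ∂fun _ ↦ powerSpin a n) η ≤
      ENNReal.ofReal (Real.exp (-l)) ^ (k + 1) *
        (∫⋯∫⁻_(Finset.range (k + 1)).map e, pathWeight β w e (k + 1) ∂fun _ ↦ powerSpin a n) η := by
  obtain ⟨S, hS, hvol, aligned⟩ := exists_aligned_set hT (β * η (e (k + 1)))
  have unit_mass : ENNReal.ofReal (Real.exp (-a)) ≤ powerSpin a n (Set.Icc (-1) 1) := by
    have := ofReal_exp_neg_le_powerSpin ha (by linarith : 0 ≤ n) (r := 1)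
      (measurableSet_Icc (a := (-1 : ℝ)) (b := 1)) (by norm_num) fun u hu ↦ abs_le.2 hu
    simpa using this
  have S_mass : ENNReal.ofReal (Real.exp (-(a * (3 * T) ^ n))) ≤ powerSpin a n S :=
    ofReal_exp_neg_le_powerSpin ha (by linarith) hS hvol fun u hu ↦ (aligned u hu).1
  refine (lmarginal_indicator_pathWeight_le hw hc).trans ?_
  refine le_trans ?_ (mul_le_mul_right
    (le_lmarginal_pathWeight hw (by linarith) unit_mass hS S_mass aligned) _)
  rw [← ENNReal.ofReal_pow (Real.exp_pos _).le, ← Real.exp_nat_mul,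
    ← ENNReal.ofReal_mul (Real.exp_pos _).le, ← Real.exp_add]
  refine ENNReal.ofReal_le_ofReal (Real.exp_le_exp.2 ?_)
  have := exponent_add_le hn ha hβ ((abs_nonneg w).trans hw) hT hkT hη
  rw [abs_mul]
  push_cast
  linarith

lemma lmarginal_indicator_abs_lt_le (hn : 2 ≤ n) (ha : 0 ≤ a) (hβ : β ≠ 0) (hw : |w| ≤ X)
    (hc : ∫⁻ u, ENNReal.ofReal (Real.exp (|β| * (u ^ 2 + X * |u|))) ∂powerSpin a n ≤
      ENNReal.ofReal (Real.exp c)) {T : ℕ → ℝ}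
    (hT : IsThresholdLadder n (growthRate β a n X) (|c + l| + a + 1) T) {N : ℕ} {η : V → ℝ}
    (hη : T N ≤ |η (e N)|) :
    (∫⋯∫⁻_(Finset.range N).map e,
        {ω | |ω (e 0)| < T 0}.indicator (pathWeight β w e N) ∂fun _ ↦ powerSpin a n) η ≤
      (∑' k, ENNReal.ofReal (Real.exp (-l)) ^ (k + 1)) *
        (∫⋯∫⁻_(Finset.range N).map e, pathWeight β w e N ∂fun _ ↦ powerSpin a n) η := by
  set r := ENNReal.ofReal (Real.exp (-l))
  set W := pathWeight β w e N
  set Z := (∫⋯∫⁻_(Finset.range N).map e, W ∂fun _ ↦ powerSpin a n) η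
  calc _ ≤ ∑ k ∈ Finset.range N,
          (∫⋯∫⁻_(Finset.range N).map e, (upcrossing e T k).indicator W ∂fun _ ↦ powerSpin a n) η :=
        lmarginal_indicator_abs_lt_le_sum_upcrossing hη (measurable_pathWeight _ _ _ _)
    _ ≤ ∑ k ∈ Finset.range N, r ^ (k + 1) * Z := Finset.sum_le_sum fun k hk ↦
        lmarginal_indicator_upcrossing_le (Finset.mem_range.1 hk) fun η' hη' ↦
          lmarginal_powerSpin_indicator_le hn ha hβ hw hc (hT.one_le k) (hT.succ_mul_le k)
            ((hT.mul_rpow_le k).trans hη')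
    _ ≤ (∑' k, r ^ (k + 1)) * Z := by
        rw [← Finset.sum_mul]
        gcongr
        exact ENNReal.sum_le_tsum _

end Ladder

section NonTightness

lemma exists_tsum_ofReal_exp_pow_succ_le {ε : ℝ} (hε : 0 < ε) :
    ∃ l : ℝ, ∑' k, ENNReal.ofReal (Real.exp (-l)) ^ (k + 1) ≤ ENNReal.ofReal ε := by
  refine ⟨Real.log ((1 + ε) / ε), ?_⟩
  have hr : Real.exp (-Real.log ((1 + ε) / ε)) = ε / (1 + ε) := by
    rw [← Real.log_inv, inv_div, Real.exp_log (by positivity)]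
  have h_one_sub : 1 - ε / (1 + ε) = (1 + ε)⁻¹ := by
    field_simp
    ring
  rw [hr, ENNReal.tsum_geometric_add_one, ← ENNReal.ofReal_one,
    ← ENNReal.ofReal_sub _ (by positivity), h_one_sub, ← ENNReal.ofReal_inv_of_pos (by positivity),
    ← ENNReal.ofReal_mul (by positivity), inv_inv, div_mul_cancel₀ _ (by positivity)]

variable {n a β : ℝ} {ξ : ℤ → ℝ}

lemma gibbs_ray_abs_zero_lt_le (hn : 2 ≤ n) (ha : 0 ≤ a) (hβ : β ≠ 0) (s : ℤˣ) {X c l : ℝ}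
    (hw : |ξ (-s)| ≤ X)
    (hc : ∫⁻ u, ENNReal.ofReal (Real.exp (|β| * (u ^ 2 + X * |u|))) ∂powerSpin a n ≤
      ENNReal.ofReal (Real.exp c)) {T : ℕ → ℝ}
    (hT : IsThresholdLadder n (growthRate β a n X) (|c + l| + a + 1) T) {m : ℕ}
    (hξ : T (m + 1) ≤ |ξ (raySite s (m + 1))|) {Λ : Finset ℤ}
    (hΛ : Λ = (Finset.range (m + 1)).map (raySite s)) (h0 : 0 ∈ Λ) :
    gibbs nearestNeighbor β (powerSpin a n) Λ ξ {φ | |φ ⟨0, h0⟩| < T 0} ≤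
      ∑' k, ENNReal.ofReal (Real.exp (-l)) ^ (k + 1) := by
  set A : Set (ℤ → ℝ) := {ω | |ω (raySite s 0)| < T 0} with hA
  set W := pathWeight β (ξ (-s)) (raySite s) (m + 1)
  set Z := (∫⋯∫⁻_Λ, W ∂fun _ ↦ powerSpin a n) ξ
  have event_eq : {φ : Λ → ℝ | |φ ⟨0, h0⟩| < T 0} = Function.updateFinset ξ Λ ⁻¹' A := by
    ext φ
    simp [hA, raySite_zero, Function.updateFinset, h0]
  have ladder : (∫⋯∫⁻_Λ, A.indicator W ∂fun _ ↦ powerSpin a n) ξ ≤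
      (∑' k, ENNReal.ofReal (Real.exp (-l)) ^ (k + 1)) * Z := by
    subst hΛ
    exact lmarginal_indicator_abs_lt_le hn ha hβ hw hc hT hξ
  rw [event_eq, gibbs_preimage_updateFinset
    (H := fun ω ↦ β * pathEnergy (ξ (-s)) (ω ∘ raySite s) (m + 1))
    (hamil_nearestNeighbor_ray s β hΛ ξ) (measurableSet_abs_lt _ _)]
  calc Z⁻¹ * (∫⋯∫⁻_Λ, A.indicator W ∂fun _ ↦ powerSpin a n) ξ
      ≤ Z⁻¹ * ((∑' k, ENNReal.ofReal (Real.exp (-l)) ^ (k + 1)) * Z) := by gcongr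
    _ = (∑' k, ENNReal.ofReal (Real.exp (-l)) ^ (k + 1)) * (Z⁻¹ * Z) := mul_left_comm _ _ _
    _ ≤ ∑' k, ENNReal.ofReal (Real.exp (-l)) ^ (k + 1) :=
        mul_le_of_le_one_right zero_le (ENNReal.inv_mul_le_one Z)

lemma exists_gibbs_abs_zero_le_le (hn : 2 < n) (ha : 0 < a) (hβ : β ≠ 0)
    (hξ : ∀ A : ℝ, 0 < A → ∃ z : ℤ, A ^ ((n - 1) ^ z.natAbs) < |ξ z|) (M : ℝ) {ε : ℝ}
    (hε : 0 < ε) :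
    ∃ Λ : Finset ℤ, ∃ h0 : 0 ∈ Λ,
      gibbs nearestNeighbor β (powerSpin a n) Λ ξ {φ | |φ ⟨0, h0⟩| ≤ M} ≤ ENNReal.ofReal ε := by
  set X := max |ξ 1| |ξ (-1)| with hX
  obtain ⟨l, hl⟩ := exists_tsum_ofReal_exp_pow_succ_le hε
  obtain ⟨c, hc⟩ := exists_le_ofReal_exp <|
    lintegral_exp_powerSpin_lt_top ha hn (b := |β|) (X := X) (by positivity)
  obtain ⟨A, hA, T, hT, hT0, hTA⟩ :=
    exists_isThresholdLadder hn (growthRate β a n X) (|c + l| + a + 1) (max M |ξ 0|)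
  obtain ⟨z, hz⟩ := hξ A hA
  have beyond : T z.natAbs < |ξ z| := (hTA _).trans_lt hz
  have hz0 : z.natAbs ≠ 0 := fun h ↦ by
    rw [Int.natAbs_eq_zero] at h
    subst h
    exact lt_asymm beyond ((le_max_right _ _).trans_lt hT0)
  obtain ⟨m, hm⟩ := Nat.exists_eq_succ_of_ne_zero hz0
  obtain ⟨s, hs⟩ := exists_eq_raySite_natAbs z
  have hw : |ξ (-s)| ≤ X := by
    rcases Int.units_eq_one_or s with rfl | rfl <;> simp [hX]
  have h0 : 0 ∈ (Finset.range (m + 1)).map (raySite s) :=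
    Finset.mem_map.2 ⟨0, by simp, raySite_zero s⟩
  refine ⟨_, h0, le_trans (measure_mono fun φ hφ ↦ ?_)
    ((gibbs_ray_abs_zero_lt_le hn.le ha.le hβ s hw hc hT ?_ rfl h0).trans hl)⟩
  · exact lt_of_le_of_lt hφ ((le_max_left _ _).trans_lt hT0)
  · rw [hm] at beyond hs
    exact hs ▸ beyond.le

end NonTightness

theorem stmt10_general (n a β : ℝ) (hn : 2 < n) (ha : 0 < a) (hβ : β ≠ 0) (ξ : ℤ → ℝ)
    (hξ : ∀ A : ℝ, 0 < A → ∃ z : ℤ, A ^ ((n - 1) ^ z.natAbs) < |ξ z|) :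
    ∃ Λ' : Finset ℤ, ¬ (∀ ε : ℝ, 0 < ε → ∃ K : Set (↥Λ' → ℝ), IsCompact K ∧
      ∀ (Λ : Finset ℤ) (h : Λ' ⊆ Λ), ENNReal.ofReal (1 - ε) ≤
        marg h (gibbs nearestNeighbor β (powerSpin a n) Λ ξ) K) := by
  refine ⟨{0}, fun tight ↦ ?_⟩
  obtain ⟨K, hK, K_mass⟩ := tight (1 / 2) (by norm_num)
  obtain ⟨M, hM⟩ := hK.isBounded.exists_norm_le
  obtain ⟨Λ, h0, escape⟩ := exists_gibbs_abs_zero_le_le hn ha hβ hξ M (ε := 1 / 4) (by norm_num)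
  have h0Λ : {0} ⊆ Λ := Finset.singleton_subset_iff.2 h0
  have marg_le : marg h0Λ (gibbs nearestNeighbor β (powerSpin a n) Λ ξ) K ≤
      ENNReal.ofReal (1 / 4) := by
    rw [marg, Measure.map_apply (by fun_prop) hK.measurableSet]
    refine (measure_mono fun φ hφ ↦ ?_).trans escape
    exact (norm_le_pi_norm _ (⟨0, Finset.mem_singleton_self 0⟩ : ({0} : Finset ℤ))).trans (hM _ hφ)
  have := (ENNReal.ofReal_le_ofReal_iff (by norm_num)).1 ((K_mass Λ h0Λ).trans marg_le)
  norm_num at this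

/-- Proposition `Anti-tightness mixed`: non-tightness for signed
boundary conditions on `ℤ`. Let `n > 2`, `ã > 0`, `β > 0`, `dρ(u) = e^(-ã|u|^n) du`,
and take the nearest-neighbour interactions on `ℤ`. If `ξ ∉ Ξ` (i.e. for every `A > 0`
there exists `z` with `|ξ_z| > A^((n-1)^|z|)`), then the family
`(ν^ξ_{Λ,β,ρ,J_G})_Λ` is not tight: there is a finite `Λ' ⊆ ℤ` such that the family of
`Λ'`-marginals over finite `Λ ⊇ Λ'` is not uniformly tight. -/
theorem stmt10 (n aT β : ℝ) (hn : 2 < n) (haT : 0 < aT) (hβ : 0 < β)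
    (ξ : ℤ → ℝ)
    (hξ : ∀ A : ℝ, 0 < A → ∃ z : ℤ, A ^ ((n - 1) ^ z.natAbs) < |ξ z|) :
    ∃ Λ' : Finset ℤ, ¬ (∀ ε : ℝ, 0 < ε → ∃ K : Set (↥Λ' → ℝ), IsCompact K ∧
      ∀ (Λ : Finset ℤ) (h : Λ' ⊆ Λ),
        ENNReal.ofReal (1 - ε) ≤
          marg h (gibbs (fun x y => if |x - y| = 1 then 1 else 0) β
            (volume.withDensity fun u => ENNReal.ofReal (Real.exp (-(aT * |u| ^ n))))
            Λ ξ) K) :=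
  stmt10_general n aT β hn haT hβ.ne' ξ hξ
end
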